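/- arXiv:2404.15476 — 6 statements merged into one kernel-verified Lean document; each statement's English description precedes it below -/
import Mathlib

section
/- Fix n ≥ 2 and let A be an alphabet with n letters. Let W ⊆ A^ℤ be an infinite totally transitive subshift. Then for every ε > 0 there exists a subshift X ⊆ A^ℤ such that the shift on X is chaotic almost minimal and the Hausdorff distance between X and W (as compact subsets of A^ℤ) is less than ε. -/
/-!
Let `c` be a long word of `W`. Since the language of `W` is irreducible, `c` extends to words `u`
and `v` such that every concatenation of copies of `u` and `v` is a cycle through `c` in the Rauzy
graph of `W`: all its subwords of length `|c|` occur in `W`. One can moreover choose `v` to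
contain every word of length `|c|` of `W`, together with a word that cannot be read in the
periodic sequence `u^∞`.

Starting from `w 0 = u` and `w 1 = v`, put `w (k + 1) = w k ++ (w j) ^ k ++ w k`, where `j ≤ k`
takes each value infinitely often, and let `X` consist of the sequences all of whose words can be
read in some `w m`. The powers of all the `w j` appear in the hierarchy, so each `(w j)^∞` lies in
`X`; these periodic points are dense, and two given open sets are visited by a common one. A point
of `X` in which `w k` does not occur lies inside the gaps between successive copies of `w k`,
which are powers of the earlier words, so it is in the orbit of some `(w j)^∞` with `j < k`. A
proper closed invariant subset avoids some `w k`, and is therefore finite.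
-/

open Set MeasureTheory

instance homeomorphGroup {X : Type*} [TopologicalSpace X] : Group (X ≃ₜ X) where
  mul f g := g.trans f
  one := Homeomorph.refl X
  inv f := f.symm
  mul_assoc f g h := Homeomorph.ext fun _ => rfl
  one_mul f := Homeomorph.ext fun _ => rfl
  mul_one f := Homeomorph.ext fun _ => rfl
  inv_mul_cancel f := Homeomorph.ext fun x => f.symm_apply_apply x

def shiftHomeo (A : Type*) [TopologicalSpace A] : (ℤ → A) ≃ₜ (ℤ → A) where
  toFun x := fun n => x (n + 1)
  invFun x := fun n => x (n - 1)
  left_inv x := funext fun n => by simp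
  right_inv x := funext fun n => by simp
  continuous_toFun := continuous_pi fun n => continuous_apply (n + 1)
  continuous_invFun := continuous_pi fun n => continuous_apply (n - 1)

def restrictHomeo {X : Type*} [TopologicalSpace X] (e : X ≃ₜ X) (s : Set X)
    (h : ∀ x, x ∈ s ↔ e x ∈ s) : s ≃ₜ s where
  toEquiv := e.toEquiv.subtypeEquiv h
  continuous_toFun := by
    exact Continuous.subtype_mk (e.continuous.comp continuous_subtype_val) _
  continuous_invFun := by
    exact Continuous.subtype_mk (e.symm.continuous.comp continuous_subtype_val) _

def IsCAMZ {X : Type*} [TopologicalSpace X] (T : X ≃ₜ X) : Prop :=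
  (∀ n : ℤ, n ≠ 0 → T ^ n ≠ 1) ∧
  (∀ U V : Set X, IsOpen U → IsOpen V → U.Nonempty → V.Nonempty →
      ∃ n : ℤ, ((T ^ n) '' U ∩ V).Nonempty) ∧
  Dense {x : X | ∃ k : ℕ, 0 < k ∧ (T ^ k) x = x} ∧
  ∀ A : Set X, IsClosed A → T '' A = A → A ≠ Set.univ → A.Finite

def IsCAM {G X : Type*} [Group G] [TopologicalSpace X] (T : G →* (X ≃ₜ X)) : Prop :=
  Function.Injective T ∧
  (∀ U V : Set X, IsOpen U → IsOpen V → U.Nonempty → V.Nonempty →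
      ∃ g : G, ((T g) '' U ∩ V).Nonempty) ∧
  Dense {x : X | (Set.range fun g : G => T g x).Finite} ∧
  ∀ A : Set X, IsClosed A → (∀ g : G, T g '' A = A) → A ≠ Set.univ → A.Finite


namespace CAMApproximation

open Filter Topology SymbolicDynamics.FullShift

/-! ### Transitive homeomorphisms -/

section Transitive

variable {X : Type*} [TopologicalSpace X] {T : X ≃ₜ X}

/-- Topological transitivity of a homeomorphism, with transition times allowed to be negative. -/
def IsTransitive (T : X ≃ₜ X) : Prop :=
  ∀ U V : Set X, IsOpen U → IsOpen V → U.Nonempty → V.Nonempty →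
    ∃ n : ℤ, ((T ^ n) '' U ∩ V).Nonempty

theorem zpow_add_apply (T : X ≃ₜ X) (m n : ℤ) (x : X) : (T ^ (m + n)) x = (T ^ m) ((T ^ n) x) := by
  rw [zpow_add]
  rfl

theorem finite_range_of_periodic {α : Type*} {f : ℤ → α} {c : ℤ} (hf : Function.Periodic f c)
    (hc : c ≠ 0) : (range f).Finite := by
  have hf' : Function.Periodic f |c| := by
    rcases abs_choice c with h | h <;> rw [h]
    exacts [hf, hf.neg]
  rw [← hf'.image_Ioc (abs_pos.2 hc) 0]
  exact (finite_Ioc _ _).image f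

theorem finite_range_zpow_apply {x : X} {p : ℤ} (hp : p ≠ 0) (hx : (T ^ p) x = x) :
    (range fun n : ℤ => (T ^ n) x).Finite :=
  finite_range_of_periodic (fun n => by rw [zpow_add_apply, hx]) hp

theorem image_zpow_eq {B : Set X} (hB : T '' B = B) (n : ℤ) : (T ^ n) '' B = B := by
  have hmul (f g : X ≃ₜ X) : (f * g) '' B = f '' (g '' B) := image_comp f g B
  have hinv : (T⁻¹ : X ≃ₜ X) '' B = B := by
    conv_lhs => rw [← hB]
    exact T.toEquiv.symm_image_image B
  induction n with
  | zero => exact image_id B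
  | succ n ih => rw [zpow_add_one, hmul, hB, ih]
  | pred n ih => rw [zpow_sub_one, hmul, hinv, ih]

namespace IsTransitive

theorem exists_zpow_mem (hT : IsTransitive T) {U V : Set X} (hU : IsOpen U) (hV : IsOpen V)
    (hUne : U.Nonempty) (hVne : V.Nonempty) : ∃ n : ℤ, ∃ x ∈ U, (T ^ n) x ∈ V := by
  obtain ⟨n, _, ⟨x, hxU, rfl⟩, hxV⟩ := hT U V hU hV hUne hVne
  exact ⟨n, x, hxU, hxV⟩

theorem of_zpow {k : ℤ} (hT : IsTransitive (T ^ k)) : IsTransitive T := by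
  intro U V hU hV hUne hVne
  obtain ⟨n, hn⟩ := hT U V hU hV hUne hVne
  exact ⟨k * n, by rwa [zpow_mul]⟩

theorem zpow_ne_one [T2Space X] (hT : IsTransitive T) {x y : X} (hxy : ∀ n : ℤ, (T ^ n) x ≠ y)
    {k : ℤ} (hk : k ≠ 0) : T ^ k ≠ 1 := by
  intro hTk
  have hpowers : (range fun n : ℤ => T ^ n).Finite :=
    finite_range_of_periodic (fun n => by rw [zpow_add, hTk, mul_one]) hk
  have horbit : (range fun n : ℤ => (T ^ n) x).Finite :=
    finite_range_zpow_apply hk (by rw [hTk]; rfl)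
  obtain ⟨U, V, hU, hV, horbitU, hyV, hUV⟩ : SeparatedNhds (range fun n : ℤ => (T ^ n) x) {y} :=
    .of_finite horbit (finite_singleton y) (by simpa using hxy)
  obtain ⟨n, z, hzU, hzV⟩ := hT.exists_zpow_mem
    (hpowers.isOpen_biInter fun S _ => hU.preimage S.continuous) hV
    ⟨x, mem_iInter₂.2 (forall_mem_range.2 fun n => horbitU ⟨n, rfl⟩)⟩ ⟨y, hyV rfl⟩
  exact disjoint_left.1 hUV (mem_iInter₂.1 hzU _ ⟨n, rfl⟩) hzV

/-- A point `x` with `{x}` open would be moved by some power `T ^ (k * n)` to `T x`, hence would be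
periodic with period `k * n - 1 ≠ 0`, and transitivity would make its finite orbit everything. -/
theorem perfectSpace_of_zpow [T1Space X] [Infinite X] {k : ℤ} (hk : 1 < k)
    (hT : IsTransitive (T ^ k)) : PerfectSpace X := by
  refine perfectSpace_iff_forall_not_isolated.2 fun x => ?_
  by_contra hx
  have hxo : IsOpen ({x} : Set X) := by
    rwa [isOpen_singleton_iff_punctured_nhds, ← not_neBot]
  obtain ⟨n, z, hz, hn⟩ := hT.exists_zpow_mem hxo (T.symm.continuous.isOpen_preimage _ hxo)
    (singleton_nonempty x) ⟨T x, T.symm_apply_apply x⟩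
  rw [mem_singleton_iff.1 hz, ← zpow_mul] at hn
  have hperiod : (T ^ (-1 + k * n)) x = x := by
    rw [zpow_add_apply, zpow_neg_one]
    exact hn
  have hne : -1 + k * n ≠ 0 := fun h =>
    hk.ne' (Int.eq_one_of_mul_eq_one_right (by omega) (by omega : k * n = 1))
  have horbit := finite_range_zpow_apply hne hperiod
  refine infinite_univ (horbit.subset fun y _ => ?_)
  by_contra hy
  obtain ⟨m, z, hz, hm⟩ := hT.of_zpow.exists_zpow_mem hxo horbit.isClosed.isOpen_compl
    (singleton_nonempty x) ⟨y, hy⟩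
  rw [mem_singleton_iff.1 hz] at hm
  exact hm ⟨m, rfl⟩

variable [T2Space X] [PerfectSpace X] {U V : Set X}

theorem exists_pos_return (hT : IsTransitive T) (hU : IsOpen U) (hUne : U.Nonempty) :
    ∃ n : ℤ, 0 < n ∧ ∃ x ∈ U, (T ^ n) x ∈ U := by
  obtain ⟨a, ha⟩ := hUne
  obtain ⟨x, hx, y, hy, hxy⟩ := (infinite_of_mem_nhds a (hU.mem_nhds ha)).nontrivial
  obtain ⟨P, Q, hP, hQ, hxP, hyQ, hPQ⟩ := t2_separation hxy
  obtain ⟨n, z, ⟨hzU, hzP⟩, hnU, hnQ⟩ := hT.exists_zpow_mem (hU.inter hP) (hU.inter hQ)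
    ⟨x, hx, hxP⟩ ⟨y, hy, hyQ⟩
  rcases lt_trichotomy n 0 with hn | rfl | hn
  · exact ⟨-n, by omega, (T ^ n) z, hnU, by rwa [← zpow_add_apply, neg_add_cancel, zpow_zero]⟩
  · exact absurd hnQ (disjoint_left.1 hPQ hzP)
  · exact ⟨n, hn, z, hzU, hnU⟩

theorem exists_late_return (hT : IsTransitive T) (hU : IsOpen U) (hUne : U.Nonempty) (b : ℕ) :
    ∃ n : ℤ, b ≤ n ∧ ∃ x ∈ U, (T ^ n) x ∈ U := by
  induction b with
  | zero =>
    obtain ⟨n, hn, h⟩ := hT.exists_pos_return hU hUne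
    exact ⟨n, by exact_mod_cast hn.le, h⟩
  | succ b ih =>
    obtain ⟨n, hn, x, hxU, hnU⟩ := ih
    obtain ⟨m, hm, y, ⟨hyU, -⟩, -, hmU⟩ := hT.exists_pos_return
      (hU.inter (hU.preimage (T ^ n).continuous)) ⟨x, hxU, hnU⟩
    exact ⟨n + m, by push_cast; omega, y, hyU, by rwa [zpow_add_apply]⟩

theorem exists_late_visit (hT : IsTransitive T) (hU : IsOpen U) (hV : IsOpen V)
    (hUne : U.Nonempty) (hVne : V.Nonempty) (b : ℕ) :
    ∃ n : ℤ, b ≤ n ∧ ∃ x ∈ U, (T ^ n) x ∈ V := by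
  obtain ⟨m, x, hxU, hmV⟩ := hT.exists_zpow_mem hU hV hUne hVne
  obtain ⟨n, hn, y, ⟨hyU, -⟩, -, hnV⟩ := hT.exists_late_return
    (hU.inter (hV.preimage (T ^ m).continuous)) ⟨x, hxU, hmV⟩ (b + m.natAbs)
  exact ⟨m + n, by omega, y, hyU, by rwa [zpow_add_apply]⟩

end IsTransitive

end Transitive

/-! ### Words occurring in sequences -/

section Words

variable {A : Type*} {x y : ℤ → A} {z z' : List A}

/-- The word of length `n` read in `x` from position `i` on. -/
def window (x : ℤ → A) (i : ℤ) (n : ℕ) : List A :=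
  List.ofFn fun k : Fin n => x (i + k)

@[simp]
theorem length_window (x : ℤ → A) (i : ℤ) (n : ℕ) : (window x i n).length = n :=
  List.length_ofFn

theorem window_add (x : ℤ → A) (i : ℤ) (m n : ℕ) :
    window x i (m + n) = window x i m ++ window x (i + m) n := by
  simp only [window, List.ofFn_add, Fin.val_castLE, Fin.val_natAdd, Nat.cast_add, add_assoc]

theorem window_shift (x : ℤ → A) (n i : ℤ) (k : ℕ) :
    window (shift n x) i k = window x (n + i) k := by
  simp only [window, shift_apply, add_assoc]

theorem window_eq_iff_mem_cylinder {i : ℤ} {n : ℕ} :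
    window y i n = window x i n ↔ y ∈ cylinder (Finset.Ico i (i + n)) x := by
  simp only [window, List.ofFn_inj, funext_iff, Fin.forall_iff,
    SymbolicDynamics.FullShift.mem_cylinder, Finset.mem_Ico]
  refine ⟨fun h j hj => ?_, fun h k hk => h _ (by omega)⟩
  obtain ⟨k, rfl⟩ := Int.le.dest hj.1
  exact h k (by omega)

theorem window_infix_window (x : ℤ → A) {i j : ℤ} {m n : ℕ} (hij : i ≤ j) (hji : j + m ≤ i + n) :
    window x j m <:+: window x i n := by
  obtain ⟨p, rfl⟩ := Int.le.dest hij
  obtain ⟨q, rfl⟩ := Nat.exists_eq_add_of_le (by omega : p + m ≤ n)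
  exact ⟨window x i p, window x (i + (p + m : ℕ)) q, by rw [window_add, window_add]⟩

/-- The word `z` can be read somewhere in the sequence `x`. -/
def Occurs (z : List A) (x : ℤ → A) : Prop :=
  ∃ i : ℤ, window x i z.length = z

theorem occurs_window (x : ℤ → A) (i : ℤ) (n : ℕ) : Occurs (window x i n) x :=
  ⟨i, by rw [length_window]⟩

theorem occurs_of_infix_window {i : ℤ} {n : ℕ} (h : z <:+: window x i n) : Occurs z x := by
  obtain ⟨a, b, hab⟩ := h
  have hn : n = a.length + z.length + b.length := by
    simpa only [List.length_append, length_window] using (congrArg List.length hab).symm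
  rw [hn, window_add, window_add] at hab
  have haz := (List.append_inj hab (by simp)).1
  exact ⟨i + a.length, (List.append_inj haz (by simp)).2.symm⟩

theorem Occurs.mono (h : Occurs z x) (hz : z' <:+: z) : Occurs z' x := by
  obtain ⟨i, hi⟩ := h
  exact occurs_of_infix_window (hi ▸ hz)

theorem occurs_shift_iff (n : ℤ) : Occurs z (shift n x) ↔ Occurs z x := by
  simp only [Occurs, window_shift]
  exact (Equiv.addLeft n).exists_congr_left.trans (by simp)

theorem Occurs.exists_window_shift (h : Occurs z x) (i : ℤ) :
    ∃ n : ℤ, window (shift n x) i z.length = z := by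
  obtain ⟨j, hj⟩ := h
  exact ⟨j - i, by rwa [window_shift, sub_add_cancel]⟩

/-- The words occurring in the points of `S`. -/
def language (S : Set (ℤ → A)) : Set (List A) :=
  {z | ∃ x ∈ S, Occurs z x}

theorem window_mem_language {S : Set (ℤ → A)} (hx : x ∈ S) (i : ℤ) (n : ℕ) :
    window x i n ∈ language S :=
  ⟨x, hx, occurs_window x i n⟩

variable [TopologicalSpace A]

theorem isOpen_setOf_window_eq [DiscreteTopology A] (z : List A) (i : ℤ) (n : ℕ) :
    IsOpen {y | window y i n = z} := by
  refine isOpen_iff_forall_mem_open.2 fun x hx => ⟨_, fun y hy => ?_,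
    isOpen_cylinder (Finset.Ico i (i + n)) x, fun _ _ => rfl⟩
  exact (window_eq_iff_mem_cylinder.2 hy).trans hx

theorem exists_forall_window_eq_imp_mem {U : Set (ℤ → A)} (hU : IsOpen U) (hx : x ∈ U) :
    ∃ R : ℕ, ∀ y, window y (-R) (2 * R + 1) = window x (-R) (2 * R + 1) → y ∈ U := by
  obtain ⟨I, u, hu, hIU⟩ := isOpen_pi_iff.1 hU x hx
  refine ⟨I.sup Int.natAbs, fun y hy => hIU fun j hj => ?_⟩
  have hjR : j.natAbs ≤ I.sup Int.natAbs := Finset.le_sup hj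
  rw [window_eq_iff_mem_cylinder.1 hy j (Finset.mem_Ico.2 (by omega))]
  exact (hu j hj).2

theorem mem_of_window_mem_language {S : Set (ℤ → A)} (hS : IsClosed S)
    (hinv : ∀ n : ℤ, MapsTo (shift n) S S) (hx : ∀ R : ℕ, window x (-R) (2 * R + 1) ∈ language S) :
    x ∈ S := by
  by_contra hxS
  obtain ⟨R, hR⟩ := exists_forall_window_eq_imp_mem hS.isOpen_compl hxS
  obtain ⟨y, hyS, hy⟩ := hx R
  obtain ⟨n, hn⟩ := hy.exists_window_shift (-R)
  rw [length_window] at hn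
  exact hR _ hn (hinv n hyS)

theorem shiftHomeo_apply_eq_shift (x : ℤ → A) : shiftHomeo A x = shift 1 x :=
  funext fun i => congrArg x (add_comm i 1)

theorem coe_restrictHomeo_zpow {S : Set (ℤ → A)} (hS : ∀ x, x ∈ S ↔ shiftHomeo A x ∈ S) (n : ℤ)
    (x : S) : ((restrictHomeo (shiftHomeo A) S hS ^ n) x : ℤ → A) = shift n (x : ℤ → A) := by
  induction n generalizing x with
  | zero => exact (shift_zero _).symm
  | succ n ih =>
    rw [zpow_add_apply, ih, add_comm, shift_add, zpow_one, ← shiftHomeo_apply_eq_shift]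
    rfl
  | pred n ih =>
    rw [sub_eq_add_neg, zpow_add_apply, ih, add_comm, shift_add, zpow_neg_one]
    congr 1
    exact funext fun i => congrArg x.1 (sub_eq_neg_add i 1)

theorem mapsTo_shift {S : Set (ℤ → A)} (hS : ∀ x, x ∈ S ↔ shiftHomeo A x ∈ S) (n : ℤ) :
    MapsTo (shift n) S S := fun x hx =>
  coe_restrictHomeo_zpow hS n ⟨x, hx⟩ ▸ Subtype.coe_prop _

theorem exists_word_forall_zpow_mem {S : Set (ℤ → A)} (hS : ∀ x, x ∈ S ↔ shiftHomeo A x ∈ S)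
    {U : Set S} (hU : IsOpen U) (hne : U.Nonempty) :
    ∃ z ∈ language S, ∀ y : S, Occurs z y.1 →
      ∃ n : ℤ, (restrictHomeo (shiftHomeo A) S hS ^ n) y ∈ U := by
  obtain ⟨V, hV, rfl⟩ := isOpen_induced_iff.1 hU
  obtain ⟨x, hx⟩ := hne
  obtain ⟨R, hR⟩ := exists_forall_window_eq_imp_mem hV hx
  refine ⟨_, window_mem_language x.2 (-R) (2 * R + 1), fun y hy => ?_⟩
  obtain ⟨n, hn⟩ := hy.exists_window_shift (-R)
  rw [length_window, ← coe_restrictHomeo_zpow hS] at hn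
  exact ⟨n, hR _ hn⟩

end Words

/-! ### Periodic sequences -/

section Periodic

variable {A : Type*} {l z : List A}

/-- The concatenation of `n` copies of `l`. -/
def wordPow (l : List A) (n : ℕ) : List A :=
  (List.replicate n l).flatten

theorem wordPow_add (l : List A) (m n : ℕ) : wordPow l (m + n) = wordPow l m ++ wordPow l n := by
  rw [wordPow, List.replicate_add, List.flatten_append, wordPow, wordPow]

theorem wordPow_one (l : List A) : wordPow l 1 = l :=
  List.flatten_singleton

theorem wordPow_induction {P : List A → Prop} (hl : P l)
    (happend : ∀ {l l' : List A}, P l → P l' → P (l ++ l')) {n : ℕ} (hn : 0 < n) :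
    P (wordPow l n) := by
  induction n, hn using Nat.le_induction with
  | base => exact (wordPow_one l).symm ▸ hl
  | succ n _ ih =>
    rw [wordPow_add, wordPow_one]
    exact happend ih hl

theorem wordPow_infix_wordPow (l : List A) {m n : ℕ} (h : m ≤ n) :
    wordPow l m <:+: wordPow l n := by
  obtain ⟨k, rfl⟩ := Nat.exists_eq_add_of_le h
  exact wordPow_add l m k ▸ (List.prefix_append _ _).isInfix

/-- The bi-infinite sequence `… l l l …`, with a copy of `l` starting at `0`. -/
def periodicSeq (l : List A) (hl : l ≠ []) (i : ℤ) : A :=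
  have hpos : (0 : ℤ) < l.length := mod_cast List.length_pos_iff.2 hl
  l[(i % l.length).toNat]'(by
    have := Int.emod_lt_of_pos i hpos
    have := Int.emod_nonneg i hpos.ne'
    omega)

theorem periodic_periodicSeq (hl : l ≠ []) : Function.Periodic (periodicSeq l hl) l.length :=
  fun i => by simp only [periodicSeq, Int.add_emod_right]

theorem window_periodicSeq_length (hl : l ≠ []) (k : ℤ) :
    window (periodicSeq l hl) (k * l.length) l.length = l := by
  refine List.ext_getElem (length_window _ _ _) fun j _ hj => ?_
  have hmod : (k * l.length + j) % (l.length : ℤ) = j := by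
    rw [Int.mul_add_emod_self_right, Int.emod_eq_of_lt (by omega) (by omega)]
  simp only [window, List.getElem_ofFn, periodicSeq, hmod, Int.toNat_natCast]

theorem window_periodicSeq (hl : l ≠ []) (k : ℤ) (n : ℕ) :
    window (periodicSeq l hl) (k * l.length) (n * l.length) = wordPow l n := by
  induction n with
  | zero => rw [Nat.zero_mul]; rfl
  | succ n ih =>
    rw [Nat.succ_mul, window_add, ih, Nat.cast_mul, ← add_mul, window_periodicSeq_length,
      wordPow_add, wordPow_one]

theorem occurs_periodicSeq_iff (hl : l ≠ []) :
    Occurs z (periodicSeq l hl) ↔ ∃ n, z <:+: wordPow l n := by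
  constructor
  · rintro ⟨i, hi⟩
    have hpos : (0 : ℤ) < l.length := mod_cast List.length_pos_iff.2 hl
    have hle := Int.ediv_mul_le i hpos.ne'
    have hlt := Int.lt_ediv_add_one_mul_self i hpos
    refine ⟨z.length + 1, ?_⟩
    rw [← window_periodicSeq hl (i / l.length), ← hi, length_window]
    exact window_infix_window _ hle (by push_cast; nlinarith)
  · rintro ⟨n, hn⟩
    rw [← window_periodicSeq hl 0] at hn
    exact occurs_of_infix_window hn

theorem occurs_periodicSeq_of_isInfix (hl : l ≠ []) (h : z <:+: l) : Occurs z (periodicSeq l hl) :=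
  (occurs_periodicSeq_iff hl).2 ⟨1, by rwa [wordPow_one]⟩

/-- The orbit of `periodicSeq l hl` under the shift. -/
def periodicOrbit (l : List A) (hl : l ≠ []) : Set (ℤ → A) :=
  range fun n : ℤ => shift n (periodicSeq l hl)

theorem finite_periodicOrbit (hl : l ≠ []) : (periodicOrbit l hl).Finite := by
  refine finite_range_of_periodic (c := l.length) (fun n => funext fun i => ?_)
    (mod_cast (List.length_pos_iff.2 hl).ne')
  rw [shift_apply, shift_apply, add_right_comm, periodic_periodicSeq hl]

theorem mapsTo_shift_periodicOrbit (hl : l ≠ []) (n : ℤ) :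
    MapsTo (shift n) (periodicOrbit l hl) (periodicOrbit l hl) := by
  rintro _ ⟨m, rfl⟩
  exact ⟨m + n, shift_add m n _⟩

theorem periodicSeq_mem_periodicOrbit (hl : l ≠ []) : periodicSeq l hl ∈ periodicOrbit l hl :=
  ⟨0, shift_zero _⟩

theorem exists_mem_language_not_occurs {S : Set (ℤ → A)} (hS : S.Infinite) (hl : l ≠ []) :
    ∃ z ∈ language S, ¬ Occurs z (periodicSeq l hl) := by
  by_contra! h
  let : TopologicalSpace A := ⊥
  have : DiscreteTopology A := ⟨rfl⟩
  exact hS ((finite_periodicOrbit hl).subset fun x hx => mem_of_window_mem_language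
    (finite_periodicOrbit hl).isClosed (mapsTo_shift_periodicOrbit hl) fun R =>
      ⟨_, periodicSeq_mem_periodicOrbit hl, h _ (window_mem_language hx _ _)⟩)

end Periodic

/-! ### Overlapping words -/

section Infix

variable {A : Type*} {a b c z r : List A}

theorem infix_append_append (h : z <:+: a ++ c ++ b) :
    z <:+: a ++ c ∨ z <:+: c ++ b ∨ c <:+: z := by
  rcases List.infix_append_iff.1 h with h | h | ⟨s, t, rfl, hs, ht⟩
  · exact .inl h
  · exact .inr (.inl (h.trans (List.suffix_append c b).isInfix))
  · rcases List.suffix_or_suffix_of_suffix hs (List.suffix_append a c) with hsc | hcs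
    · obtain ⟨d, rfl⟩ := hsc
      exact .inr (.inl ((List.prefix_append_right_inj s).2 ht |>.isInfix.trans
        ⟨d, [], by simp only [List.append_assoc, List.append_nil]⟩))
    · exact .inr (.inr (hcs.isInfix.trans (List.prefix_append s t).isInfix))

theorem infix_of_append_append {c' : List A} (h : a ++ z ++ b <:+: c ++ r ++ c')
    (ha : c.length ≤ a.length) (hb : c'.length ≤ b.length) : z <:+: r := by
  obtain ⟨s, t, hst⟩ := h
  simp only [List.append_assoc] at hst
  obtain ⟨p, hp⟩ : c <+: s ++ a := List.prefix_of_prefix_length_le (List.prefix_append c (r ++ c'))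
    ⟨z ++ (b ++ t), by rw [← hst, List.append_assoc]⟩ (by rw [List.length_append]; omega)
  obtain ⟨q, hq⟩ : c' <:+ b ++ t := List.suffix_of_suffix_length_le
    ⟨c ++ r, List.append_assoc ..⟩
    ⟨s ++ (a ++ z), by rw [← hst]; simp only [List.append_assoc]⟩
    (by rw [List.length_append]; omega)
  refine ⟨p, q, ?_⟩
  rw [← hq, ← List.append_assoc s, ← hp] at hst
  exact List.append_cancel_left (as := c)
    (List.append_cancel_right (bs := c') (by simpa only [List.append_assoc] using hst))

end Infix

/-! ### Words with controlled gaps -/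

section Gapped

variable {A : Type*} {G : Set (List A)} {c l l' r : List A}

/-- The word `l` starts and ends with `c`, and every subword of `l` avoiding `c` is explained by a
gap in `G`: it can be read in `c ++ r ++ c` for some `r ∈ G`. -/
structure IsGapped (G : Set (List A)) (c l : List A) : Prop where
  isPrefix : c <+: l
  isSuffix : c <:+ l
  exists_gap : ∀ z, z <:+: l → ¬ c <:+: z → ∃ r ∈ G, z <:+: c ++ r ++ c

theorem isGapped_self (hG : G.Nonempty) : IsGapped G c c where
  isPrefix := List.prefix_rfl
  isSuffix := List.suffix_rfl
  exists_gap _ hz _ :=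
    let ⟨r, hr⟩ := hG
    ⟨r, hr, hz.trans (List.suffix_append (c ++ r) c).isInfix⟩

theorem IsGapped.append_append (h : IsGapped G c l) (hr : r ∈ G) (h' : IsGapped G c l') :
    IsGapped G c (l ++ r ++ l') where
  isPrefix := h.isPrefix.trans (List.append_assoc l r l' ▸ List.prefix_append _ _)
  isSuffix := h'.isSuffix.trans (List.suffix_append _ _)
  exists_gap z hz hcz := by
    obtain ⟨s, hs⟩ := h.isSuffix
    obtain ⟨t, ht⟩ := h'.isPrefix
    have hz' : z <:+: s ++ c ++ (r ++ l') := by rwa [hs, ← List.append_assoc]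
    rcases infix_append_append hz' with hz | hz | hz
    · exact h.exists_gap z (hs ▸ hz) hcz
    · have hz' : z <:+: c ++ r ++ c ++ t := by rwa [List.append_assoc, ht, List.append_assoc]
      rcases infix_append_append hz' with hz | hz | hz
      · exact ⟨r, hr, hz⟩
      · exact h'.exists_gap z (ht ▸ hz) hcz
      · exact absurd hz hcz
    · exact absurd hz hcz

theorem IsGapped.pow (hG : [] ∈ G) (h : IsGapped G c l) {n : ℕ} (hn : 0 < n) :
    IsGapped G c (wordPow l n) :=
  wordPow_induction h (fun h h' => by simpa only [List.append_nil] using h.append_append hG h') hn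

/-- The powers of the words `w j` with `j < k`. -/
def powersBelow (w : ℕ → List A) (k : ℕ) : Set (List A) :=
  {r | ∃ j < k, ∃ n, r = wordPow (w j) n}

theorem nil_mem_powersBelow (w : ℕ → List A) {k : ℕ} (hk : 0 < k) : [] ∈ powersBelow w k :=
  ⟨0, hk, 0, rfl⟩

end Gapped

/-! ### The subshift of a gap hierarchy -/

section WordSubshift

variable {A : Type*} {w : ℕ → List A}

/-- The sequences all of whose finite words are subwords of some `w m`. -/
def wordSubshift (w : ℕ → List A) : Set (ℤ → A) :=
  {x | ∀ z, Occurs z x → ∃ m, z <:+: w m}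

theorem isClosed_wordSubshift [TopologicalSpace A] [DiscreteTopology A] (w : ℕ → List A) :
    IsClosed (wordSubshift w) := by
  refine isOpen_compl_iff.1 (isOpen_iff_forall_mem_open.2 fun x hx => ?_)
  obtain ⟨z, ⟨i, hi⟩, hz⟩ : ∃ z, Occurs z x ∧ ∀ m, ¬ z <:+: w m := by
    simpa [wordSubshift] using hx
  refine ⟨_, fun y hy hyw => ?_, isOpen_setOf_window_eq z i z.length, hi⟩
  obtain ⟨m, hm⟩ := hyw z ⟨i, hy⟩
  exact hz m hm

theorem mem_wordSubshift_iff_shiftHomeo [TopologicalSpace A] (w : ℕ → List A) (x : ℤ → A) :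
    x ∈ wordSubshift w ↔ shiftHomeo A x ∈ wordSubshift w := by
  simp only [wordSubshift, mem_ofPred_eq, shiftHomeo_apply_eq_shift, occurs_shift_iff]

/-- The shift of `wordSubshift w`. -/
abbrev wordShift [TopologicalSpace A] (w : ℕ → List A) : wordSubshift w ≃ₜ wordSubshift w :=
  restrictHomeo (shiftHomeo A) (wordSubshift w) (mem_wordSubshift_iff_shiftHomeo w)

theorem finite_biUnion_periodicOrbit (hw : ∀ j, w j ≠ []) (k : ℕ) :
    (⋃ j ∈ Iio k, periodicOrbit (w j) (hw j)).Finite :=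
  (finite_Iio k).biUnion fun j _ => finite_periodicOrbit (hw j)

/-- A sequence of words `w` in which every power of every word is eventually read, while for each
`k > 0` the words `w M` are eventually concatenations of copies of `w k` and powers of the earlier
words. The field `exists_isInfix` makes the periodic sequences of `w 0` and `w 1` distinct. -/
structure IsGapHierarchy (w : ℕ → List A) : Prop where
  ne_nil : ∀ k, w k ≠ []
  eventually_wordPow_isInfix : ∀ k n, ∀ᶠ M in atTop, wordPow (w k) n <:+: w M
  eventually_isGapped : ∀ k, 0 < k → ∀ᶠ M in atTop, IsGapped (powersBelow w k) (w k) (w M)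
  exists_isInfix : ∃ z, z <:+: w 1 ∧ ∀ n, ¬ z <:+: wordPow (w 0) n

namespace IsGapHierarchy

theorem periodicSeq_mem (hw : IsGapHierarchy w) (k : ℕ) :
    periodicSeq (w k) (hw.ne_nil k) ∈ wordSubshift w := by
  intro z hz
  obtain ⟨n, hn⟩ := (occurs_periodicSeq_iff _).1 hz
  obtain ⟨M, hM⟩ := (hw.eventually_wordPow_isInfix k n).exists
  exact ⟨M, hn.trans hM⟩

theorem mem_language_iff (hw : IsGapHierarchy w) {z : List A} :
    z ∈ language (wordSubshift w) ↔ ∃ m, z <:+: w m := by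
  refine ⟨fun ⟨_, hx, hz⟩ => hx z hz, fun ⟨m, hm⟩ => ⟨_, hw.periodicSeq_mem m, ?_⟩⟩
  exact occurs_periodicSeq_of_isInfix _ hm

theorem eventually_isInfix (hw : IsGapHierarchy w) {z : List A}
    (hz : z ∈ language (wordSubshift w)) : ∀ᶠ M in atTop, z <:+: w M := by
  obtain ⟨m, hm⟩ := hw.mem_language_iff.1 hz
  filter_upwards [hw.eventually_wordPow_isInfix m 1] with M hM
  exact hm.trans (wordPow_one (w m) ▸ hM)

theorem shift_periodicSeq_ne (hw : IsGapHierarchy w) (n : ℤ) :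
    shift n (periodicSeq (w 0) (hw.ne_nil 0)) ≠ periodicSeq (w 1) (hw.ne_nil 1) := by
  intro h
  obtain ⟨z, hz, hz0⟩ := hw.exists_isInfix
  have hz1 := occurs_periodicSeq_of_isInfix (hw.ne_nil 1) hz
  rw [← h, occurs_shift_iff, occurs_periodicSeq_iff] at hz1
  exact hz1.elim hz0

variable [TopologicalSpace A]

theorem eventually_exists_zpow_mem (hw : IsGapHierarchy w) {U : Set (wordSubshift w)}
    (hU : IsOpen U) (hUne : U.Nonempty) :
    ∀ᶠ M in atTop, ∃ n : ℤ, (wordShift w ^ n) ⟨_, hw.periodicSeq_mem M⟩ ∈ U := by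
  obtain ⟨z, hz, hzU⟩ := exists_word_forall_zpow_mem _ hU hUne
  filter_upwards [hw.eventually_isInfix hz] with M hM
  exact hzU ⟨_, hw.periodicSeq_mem M⟩ (occurs_periodicSeq_of_isInfix (hw.ne_nil M) hM)

theorem isTransitive (hw : IsGapHierarchy w) :
    IsTransitive (wordShift w) := by
  intro U V hU hV hUne hVne
  obtain ⟨M, ⟨p, hp⟩, ⟨q, hq⟩⟩ := ((hw.eventually_exists_zpow_mem hU hUne).and
    (hw.eventually_exists_zpow_mem hV hVne)).exists
  exact ⟨q - p, _, ⟨_, hp, rfl⟩, by rwa [← zpow_add_apply, sub_add_cancel]⟩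

theorem dense_periodic (hw : IsGapHierarchy w) :
    Dense {x | ∃ k : ℕ, 0 < k ∧ (wordShift w ^ k) x = x} := by
  refine dense_iff_inter_open.2 fun U hU hUne => ?_
  obtain ⟨M, n, hn⟩ := (hw.eventually_exists_zpow_mem hU hUne).exists
  refine ⟨_, hn, (w M).length, List.length_pos_iff.2 (hw.ne_nil M), Subtype.ext ?_⟩
  rw [← zpow_natCast, coe_restrictHomeo_zpow, coe_restrictHomeo_zpow]
  funext i
  simp only [shift_apply]
  rw [← add_assoc, add_comm, ← add_assoc, periodic_periodicSeq, add_comm]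

/-- Long subwords of `x` avoid `w k`, hence up to their ends lie in powers of a single `w j`. -/
theorem mem_periodicOrbit_of_not_occurs [T1Space A] (hw : IsGapHierarchy w) {k : ℕ} (hk : 0 < k)
    {x : ℤ → A} (hx : x ∈ wordSubshift w) (hxk : ¬ Occurs (w k) x) :
    x ∈ ⋃ j ∈ Iio k, periodicOrbit (w j) (hw.ne_nil j) := by
  refine mem_of_window_mem_language (finite_biUnion_periodicOrbit hw.ne_nil k).isClosed
    (fun n => mapsTo_iUnion₂_iUnion₂ fun j _ => mapsTo_shift_periodicOrbit _ n) fun R => ?_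
  set L := (w k).length
  have hlong := occurs_window x (-R - L) (L + (2 * R + 1) + L)
  obtain ⟨M, hM, hgapped⟩ :=
    ((hw.eventually_isInfix ⟨x, hx, hlong⟩).and (hw.eventually_isGapped k hk)).exists
  obtain ⟨_, ⟨j, hj, n, rfl⟩, hr⟩ := hgapped.exists_gap _ hM fun h => hxk (hlong.mono h)
  rw [window_add, window_add, sub_add_cancel] at hr
  have hpow := infix_of_append_append hr (length_window x _ L).ge (length_window x _ L).ge
  exact ⟨_, mem_biUnion (mem_Iio.2 hj) (periodicSeq_mem_periodicOrbit _),
    (occurs_periodicSeq_iff _).2 ⟨n, hpow⟩⟩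

theorem finite_of_isClosed [T1Space A] (hw : IsGapHierarchy w) {B : Set (wordSubshift w)}
    (hB : IsClosed B) (hinv : wordShift w '' B = B) (hne : B ≠ univ) : B.Finite := by
  obtain ⟨z, hz, hzB⟩ := exists_word_forall_zpow_mem (mem_wordSubshift_iff_shiftHomeo w)
    hB.isOpen_compl (nonempty_compl.2 hne)
  obtain ⟨k, hzk, hk⟩ := ((hw.eventually_isInfix hz).and (eventually_gt_atTop 0)).exists
  refine ((finite_biUnion_periodicOrbit hw.ne_nil k).preimage
    Subtype.val_injective.injOn).subset fun y hy =>
      hw.mem_periodicOrbit_of_not_occurs hk y.2 fun hyk => ?_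
  obtain ⟨n, hn⟩ := hzB y (hyk.mono hzk)
  exact hn (image_zpow_eq hinv n ▸ mem_image_of_mem _ hy)

theorem isCAMZ [T2Space A] (hw : IsGapHierarchy w) : IsCAMZ (wordShift w) := by
  refine ⟨fun k hk => hw.isTransitive.zpow_ne_one (x := ⟨_, hw.periodicSeq_mem 0⟩)
    (y := ⟨_, hw.periodicSeq_mem 1⟩) (fun n hn => hw.shift_periodicSeq_ne n ?_) hk,
    hw.isTransitive, hw.dense_periodic, fun B hB hinv hne => hw.finite_of_isClosed hB hinv hne⟩
  exact (coe_restrictHomeo_zpow _ _ _).symm.trans (congrArg Subtype.val hn)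

end IsGapHierarchy

end WordSubshift

/-! ### The hierarchy of two words -/

section Hierarchy

variable {A : Type*} {u v z : List A}

/-- The words `w 0 = u`, `w 1 = v` and `w (k + 1) = w k ++ (w j) ^ k ++ w k` for `k > 0`, where
`j ≤ k` is the first component of the pair coded by `k`, so that each index `j` is used infinitely
often. -/
def hierarchy (u v : List A) : ℕ → List A
  | 0 => u
  | 1 => v
  | k + 2 => hierarchy u v (k + 1) ++ wordPow (hierarchy u v (k + 1).unpair.1) (k + 1) ++
      hierarchy u v (k + 1)
decreasing_by
  all_goals have := Nat.unpair_left_le (k + 1)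
  all_goals omega

theorem hierarchy_zero (u v : List A) : hierarchy u v 0 = u := by
  rw [hierarchy]

theorem hierarchy_one (u v : List A) : hierarchy u v 1 = v := by
  rw [hierarchy]

theorem hierarchy_succ (u v : List A) {k : ℕ} (hk : 0 < k) : hierarchy u v (k + 1) =
    hierarchy u v k ++ wordPow (hierarchy u v k.unpair.1) k ++ hierarchy u v k := by
  obtain ⟨k, rfl⟩ := Nat.exists_eq_succ_of_ne_zero hk.ne'
  rw [hierarchy]

theorem hierarchy_induction {P : List A → Prop} (hu : P u) (hv : P v)
    (happend : ∀ {l l' : List A}, P l → P l' → P (l ++ l')) (k : ℕ) : P (hierarchy u v k) := by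
  induction k using Nat.strong_induction_on with
  | h k ih =>
    match k, ih with
    | 0, _ => rwa [hierarchy_zero]
    | 1, _ => rwa [hierarchy_one]
    | k + 2, ih =>
      have hk := ih (k + 1) (by omega)
      have hj := ih (k + 1).unpair.1 (Nat.lt_succ_of_le (Nat.unpair_left_le _))
      rw [hierarchy_succ u v k.succ_pos]
      exact happend (happend hk (wordPow_induction hj happend k.succ_pos)) hk

theorem hierarchy_infix_hierarchy (u v : List A) {k M : ℕ} (hk : 0 < k) (hkM : k ≤ M) :
    hierarchy u v k <:+: hierarchy u v M := by
  induction M, hkM using Nat.le_induction with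
  | base => exact List.infix_rfl
  | succ M hM ih =>
    rw [hierarchy_succ u v (hk.trans_le hM)]
    exact ih.trans (List.suffix_append _ _).isInfix

theorem eventually_wordPow_infix_hierarchy (u v : List A) (k n : ℕ) :
    ∀ᶠ M in atTop, wordPow (hierarchy u v k) n <:+: hierarchy u v M := by
  set p := Nat.pair k (n + 1)
  have hnp : n < p := Nat.right_le_pair k (n + 1)
  filter_upwards [eventually_ge_atTop (p + 1)] with M hM
  refine List.IsInfix.trans ?_ (hierarchy_infix_hierarchy u v p.succ_pos hM)
  rw [hierarchy_succ u v (n.zero_le.trans_lt hnp), Nat.unpair_pair]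
  exact (wordPow_infix_wordPow _ hnp.le).trans (List.infix_append _ _ _)

theorem isGapped_hierarchy (u v : List A) {k M : ℕ} (hk : 0 < k) (hkM : k ≤ M) :
    IsGapped (powersBelow (hierarchy u v) k) (hierarchy u v k) (hierarchy u v M) := by
  have hnil := nil_mem_powersBelow (hierarchy u v) hk
  induction M using Nat.strong_induction_on with
  | h M ih =>
    obtain rfl | hlt := hkM.eq_or_lt
    · exact isGapped_self ⟨_, hnil⟩
    obtain ⟨M, rfl⟩ := Nat.exists_eq_succ_of_ne_zero (hk.trans hlt).ne'
    have hM := ih M M.lt_succ_self (Nat.le_of_lt_succ hlt)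
    rw [hierarchy_succ u v (by omega)]
    rcases lt_or_ge M.unpair.1 k with hj | hj
    · exact hM.append_append ⟨_, hj, M, rfl⟩ hM
    · have hpow := (ih _ (Nat.lt_succ_of_le M.unpair_left_le) hj).pow hnil (by omega : 0 < M)
      simpa only [List.append_nil] using (hM.append_append hnil hpow).append_append hnil hM

theorem isGapHierarchy_hierarchy (hu : u ≠ []) (hz : z <:+: v) (hzu : ∀ n, ¬ z <:+: wordPow u n) :
    IsGapHierarchy (hierarchy u v) where
  ne_nil := by
    have hv : v ≠ [] := by
      rintro rfl
      exact hzu 0 hz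
    exact hierarchy_induction (P := (· ≠ [])) hu hv fun hl _ =>
      List.append_ne_nil_of_left_ne_nil hl _
  eventually_wordPow_isInfix := eventually_wordPow_infix_hierarchy u v
  eventually_isGapped k hk := (eventually_ge_atTop k).mono fun _ => isGapped_hierarchy u v hk
  exists_isInfix := ⟨z, by rwa [hierarchy_one], by rwa [hierarchy_zero]⟩

end Hierarchy

/-! ### Irreducible languages -/

section Irreducible

variable {A : Type*} {L : Set (List A)} {c l l' : List A} {S : Set (ℤ → A)}

/-- A factorial language in which any two words are joined by a third one. -/
structure IsIrreducible (L : Set (List A)) : Prop where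
  mem_of_isInfix : ∀ {z z'}, z ∈ L → z' <:+: z → z' ∈ L
  exists_append_mem : ∀ {a b}, a ∈ L → b ∈ L → ∃ r, a ++ r ++ b ∈ L

theorem isIrreducible_language [TopologicalSpace A] [DiscreteTopology A] [PerfectSpace S]
    (hinv : ∀ x, x ∈ S ↔ shiftHomeo A x ∈ S)
    (hS : IsTransitive (restrictHomeo (shiftHomeo A) S hinv)) : IsIrreducible (language S) where
  mem_of_isInfix := fun ⟨x, hx, hz⟩ hz' => ⟨x, hx, hz.mono hz'⟩
  exists_append_mem := by
    have hopen (a : List A) : IsOpen {x : S | window x.1 0 a.length = a} :=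
      (isOpen_setOf_window_eq a 0 a.length).preimage continuous_subtype_val
    have hne {a : List A} : a ∈ language S → {x : S | window x.1 0 a.length = a}.Nonempty := by
      rintro ⟨x, hx, ha⟩
      obtain ⟨n, hn⟩ := ha.exists_window_shift 0
      exact ⟨⟨_, mapsTo_shift hinv n hx⟩, hn⟩
    intro a b ha hb
    obtain ⟨n, hn, x, hxa, hxb⟩ :=
      hS.exists_late_visit (hopen a) (hopen b) (hne ha) (hne hb) a.length
    obtain ⟨q, rfl⟩ := Int.le.dest hn
    rw [mem_ofPred_eq, coe_restrictHomeo_zpow, window_shift, add_zero] at hxb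
    refine ⟨window x a.length q, ?_⟩
    have hword := window_mem_language x.2 0 (a.length + q + b.length)
    rwa [window_add, window_add, zero_add, zero_add, Nat.cast_add, hxa, hxb] at hword

/-- `l` labels a cycle through `c` in the Rauzy graph of `L`: the word `l ++ c` starts with `c`, and
all its subwords of the same length as `c` belong to `L`. -/
structure IsRauzyCycle (L : Set (List A)) (c l : List A) : Prop where
  isPrefix : c <+: l ++ c
  mem_of_isInfix : ∀ z, z <:+: l ++ c → z.length = c.length → z ∈ L

theorem IsRauzyCycle.append (h : IsRauzyCycle L c l) (h' : IsRauzyCycle L c l') :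
    IsRauzyCycle L c (l ++ l') := by
  obtain ⟨t, ht⟩ := h'.isPrefix
  have heq : l ++ l' ++ c = l ++ c ++ t := by
    rw [List.append_assoc, List.append_assoc, ht]
  refine ⟨heq ▸ h.isPrefix.trans (List.prefix_append _ _), fun z hz hlen => ?_⟩
  rcases infix_append_append (heq ▸ hz) with hz | hz | hz
  · exact h.mem_of_isInfix z hz hlen
  · exact h'.mem_of_isInfix z (ht ▸ hz) hlen
  · exact h.mem_of_isInfix z (hz.eq_of_length hlen.symm ▸ h.isPrefix.isInfix) hlen

namespace IsIrreducible

theorem exists_append_mem_isInfix (hL : IsIrreducible L) (hc : c ∈ L) {F : Set (List A)}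
    (hF : F.Finite) (hFL : F ⊆ L) : ∃ l, c ++ l ∈ L ∧ ∀ z ∈ F, z <:+: l := by
  induction F, hF using Set.Finite.induction_on with
  | empty => exact ⟨[], by rwa [List.append_nil], fun z hz => hz.elim⟩
  | insert _ _ ih =>
    obtain ⟨hz, hFL⟩ := insert_subset_iff.1 hFL
    obtain ⟨l, hl, hlF⟩ := ih hFL
    obtain ⟨r, hr⟩ := hL.exists_append_mem hl hz
    refine ⟨l ++ r ++ _, by simpa only [List.append_assoc] using hr, ?_⟩
    refine forall_mem_insert.2 ⟨(List.suffix_append _ _).isInfix, fun z hz => ?_⟩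
    exact (hlF z hz).trans (List.append_assoc l r _ ▸ (List.prefix_append _ _).isInfix)

theorem exists_isRauzyCycle (hL : IsIrreducible L) (hc : c ∈ L) {F : Set (List A)}
    (hF : F.Finite) (hFL : F ⊆ L) : ∃ l, IsRauzyCycle L c l ∧ ∀ z ∈ F, z <:+: l := by
  obtain ⟨l, hl, hlF⟩ := hL.exists_append_mem_isInfix hc hF hFL
  obtain ⟨r, hr⟩ := hL.exists_append_mem hl hc
  refine ⟨c ++ l ++ r, ⟨?_, fun z hz _ => hL.mem_of_isInfix hr hz⟩,
    fun z hz => (hlF z hz).trans (List.infix_append c l r)⟩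
  simp only [List.append_assoc, List.prefix_append]

theorem exists_isGapHierarchy [Finite A] (hL : IsIrreducible (language S)) (hS : S.Infinite)
    {N : ℕ} (hN : 0 < N) : ∃ w, IsGapHierarchy w ∧
      ∀ z : List A, z.length = N → (z ∈ language (wordSubshift w) ↔ z ∈ language S) := by
  obtain ⟨x, hx⟩ := hS.nonempty
  obtain ⟨c, hcS, hcN⟩ : ∃ c ∈ language S, c.length = N :=
    ⟨_, window_mem_language hx 0 N, length_window x 0 N⟩
  obtain ⟨u, hu, hcu⟩ := hL.exists_isRauzyCycle hcS (finite_singleton c)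
    (singleton_subset_iff.2 hcS)
  have hne : u ≠ [] := by
    rintro rfl
    have := (hcu c rfl).length_le
    simp only [List.length_nil] at this
    omega
  obtain ⟨b, hbS, hbu⟩ := exists_mem_language_not_occurs hS hne
  obtain ⟨v, hv, hFv⟩ := hL.exists_isRauzyCycle (F := insert b {z ∈ language S | z.length = N}) hcS
    (((List.finite_length_eq A N).subset fun _ hz => hz.2).insert b)
    (insert_subset hbS fun _ hz => hz.1)
  have hw := isGapHierarchy_hierarchy hne (hFv b (mem_insert _ _))
    fun n hn => hbu ((occurs_periodicSeq_iff hne).2 ⟨n, hn⟩)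
  refine ⟨hierarchy u v, hw, fun z hz => hw.mem_language_iff.trans ⟨fun ⟨m, hm⟩ => ?_, fun hzS =>
    ⟨1, (hierarchy_one u v).symm ▸ hFv z (mem_insert_of_mem b ⟨hzS, hz⟩)⟩⟩⟩
  have hcycle := hierarchy_induction hu hv IsRauzyCycle.append m
  exact hcycle.mem_of_isInfix z (hm.trans (List.prefix_append _ c).isInfix) (hz.trans hcN.symm)

end IsIrreducible

end Irreducible

/-! ### Hausdorff distance and languages -/

section Hausdorff

variable {A : Type*}

theorem exists_forall_window_eq_imp_dist_lt [TopologicalSpace A] [CompactSpace A] [T2Space A]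
    (m : PseudoMetricSpace (ℤ → A))
    (hm : m.toUniformSpace.toTopologicalSpace = Pi.topologicalSpace)
    {ε : ℝ} (hε : 0 < ε) : ∃ R : ℕ, ∀ x y : ℤ → A,
      window x (-R) (2 * R + 1) = window y (-R) (2 * R + 1) → dist x y < ε := by
  have hdist : Continuous fun p : (ℤ → A) × (ℤ → A) => m.dist p.1 p.2 := hm ▸ @continuous_dist _ m
  let V (R : ℕ) : Set ((ℤ → A) × (ℤ → A)) := ⋂ i ∈ Icc (-R : ℤ) R, {p | p.1 i = p.2 i}
  have hVanti : Antitone V := fun R R' hR =>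
    biInter_subset_biInter_left (Icc_subset_Icc (by omega) (by omega))
  have hVclosed (R : ℕ) : IsClosed (V R) := isClosed_biInter fun i _ =>
    isClosed_eq (by fun_prop) (by fun_prop)
  have hVdist : ∀ p ∈ ⋂ R, V R, {p | m.dist p.1 p.2 < ε} ∈ 𝓝 p := by
    intro p hp
    have hp : p.1 = p.2 := funext fun i =>
      mem_iInter₂.1 (mem_iInter.1 hp i.natAbs) i ⟨by omega, by omega⟩
    refine (isOpen_Iio.preimage hdist).mem_nhds ?_
    rw [mem_preimage, hp, m.dist_self]
    exact hε
  obtain ⟨R, hR⟩ := exists_subset_nhds_of_compactSpace hVanti.directed_ge hVclosed hVdist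
  refine ⟨R, fun x y hxy => @hR (x, y) (mem_iInter₂.2 fun i hi => ?_)⟩
  exact window_eq_iff_mem_cylinder.1 hxy i (Finset.mem_Ico.2 ⟨hi.1, by have := hi.2; omega⟩)

theorem exists_forall_hausdorffDist_lt [TopologicalSpace A] [CompactSpace A] [T2Space A]
    (m : PseudoMetricSpace (ℤ → A))
    (hm : m.toUniformSpace.toTopologicalSpace = Pi.topologicalSpace)
    {ε : ℝ} (hε : 0 < ε) : ∃ N : ℕ, 0 < N ∧ ∀ X Y : Set (ℤ → A),
      (∀ n : ℤ, MapsTo (shift n) X X) → (∀ n : ℤ, MapsTo (shift n) Y Y) →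
      (∀ z : List A, z.length = N → (z ∈ language X ↔ z ∈ language Y)) →
      Metric.hausdorffDist X Y < ε := by
  obtain ⟨R, hR⟩ := exists_forall_window_eq_imp_dist_lt m hm (half_pos hε)
  have hclose {X Y : Set (ℤ → A)} (hY : ∀ n : ℤ, MapsTo (shift n) Y Y)
      (hXY : ∀ z : List A, z.length = 2 * R + 1 → z ∈ language X → z ∈ language Y) :
      ∀ x ∈ X, ∃ y ∈ Y, dist x y ≤ ε / 2 := by
    intro x hx
    obtain ⟨y, hy, hz⟩ := hXY _ (length_window _ _ _) (window_mem_language hx (-R) (2 * R + 1))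
    obtain ⟨n, hn⟩ := hz.exists_window_shift (-R)
    rw [length_window] at hn
    exact ⟨_, hY n hy, (hR _ _ hn.symm).le⟩
  refine ⟨2 * R + 1, by omega, fun X Y hX hY hXY => ?_⟩
  exact (Metric.hausdorffDist_le_of_mem_dist (half_pos hε).le
    (hclose hY fun z hz => (hXY z hz).1) (hclose hX fun z hz => (hXY z hz).2)).trans_lt
      (half_lt_self hε)

end Hausdorff

end CAMApproximation

open CAMApproximation in
theorem statement9_general {A : Type*} [Finite A] [TopologicalSpace A] [DiscreteTopology A]
    (m : PseudoMetricSpace (ℤ → A))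
    (hm : m.toUniformSpace.toTopologicalSpace = (inferInstance : TopologicalSpace (ℤ → A)))
    {W : Set (ℤ → A)} (hWne : W.Nonempty) (hWinv : ∀ x, x ∈ W ↔ shiftHomeo A x ∈ W)
    (hperfect : PerfectSpace W)
    (htrans : IsTransitive (restrictHomeo (shiftHomeo A) W hWinv)) {ε : ℝ} (hε : 0 < ε) :
    ∃ (X : Set (ℤ → A)) (hXinv : ∀ x, x ∈ X ↔ shiftHomeo A x ∈ X),
      X.Nonempty ∧ IsClosed X ∧ IsCAMZ (restrictHomeo (shiftHomeo A) X hXinv) ∧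
        @Metric.hausdorffDist _ m X W < ε := by
  have hWinf : W.Infinite :=
    have ⟨x, hx⟩ := hWne
    infinite_coe_iff.1 (infinite_univ_iff.1
      (infinite_of_mem_nhds (⟨x, hx⟩ : W) Filter.univ_mem))
  obtain ⟨N, hN, hdist⟩ := exists_forall_hausdorffDist_lt m hm hε
  obtain ⟨w, hw, hlang⟩ := (isIrreducible_language hWinv htrans).exists_isGapHierarchy hWinf hN
  have hXinv := mem_wordSubshift_iff_shiftHomeo w
  exact ⟨wordSubshift w, hXinv, ⟨_, hw.periodicSeq_mem 0⟩, isClosed_wordSubshift w, hw.isCAMZ,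
    hdist _ _ (mapsTo_shift hXinv) (mapsTo_shift hWinv) hlang⟩

/-- For an alphabet `A` with at least two letters, any metric on `A^ℤ`
compatible with the product topology, and any infinite totally transitive subshift
`W ⊆ A^ℤ`, for every `ε > 0` there is a chaotic almost minimal subshift `X ⊆ A^ℤ`
whose Hausdorff distance to `W` is less than `ε`. -/
theorem statement9 {A : Type*} [Fintype A] [TopologicalSpace A] [DiscreteTopology A]
    (hA : 2 ≤ Fintype.card A)
    (m : MetricSpace (ℤ → A))
    (hm : m.toPseudoMetricSpace.toUniformSpace.toTopologicalSpace
      = (inferInstance : TopologicalSpace (ℤ → A)))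
    (W : Set (ℤ → A)) (hWne : W.Nonempty) (hWcl : IsClosed W) (hWinf : W.Infinite)
    (hWinv : ∀ x, x ∈ W ↔ shiftHomeo A x ∈ W)
    (htt : ∀ k : ℕ, 0 < k →
      ∀ U V : Set W, IsOpen U → IsOpen V → U.Nonempty → V.Nonempty →
        ∃ n : ℤ,
          ((((restrictHomeo (shiftHomeo A) W hWinv) ^ (k : ℤ)) ^ n) '' U ∩ V).Nonempty) :
    ∀ ε : ℝ, 0 < ε →
      ∃ (X : Set (ℤ → A)) (hXinv : ∀ x, x ∈ X ↔ shiftHomeo A x ∈ X),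
        X.Nonempty ∧ IsClosed X ∧
        IsCAMZ (restrictHomeo (shiftHomeo A) X hXinv) ∧
        @Metric.hausdorffDist _ m.toPseudoMetricSpace X W < ε := by
  have hinf : Infinite W := hWinf.to_subtype
  have hsq : CAMApproximation.IsTransitive
      (restrictHomeo (shiftHomeo A) W hWinv ^ ((2 : ℕ) : ℤ)) := htt 2 two_pos
  exact fun ε hε => statement9_general m.toPseudoMetricSpace hm hWne hWinv
    (hsq.perfectSpace_of_zpow (by norm_num)) hsq.of_zpow hε
end

section
/- Let X be a locally connected compact metric space and let T: X → X be an expansive homeomorphism. Then (X,T) is not chaotic almost minimal. -/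
/-!
An expansive system with a periodic point `p` such that all closed invariant sets missing `p` are
finite contains no nondegenerate continuum. A locally connected compact space has finitely many
components, so if it contains no nondegenerate continuum it is finite, and then some nonzero power
of `T` is the identity.

Let `ε` be an expansivity constant. A continuum is unstable if all its backward iterates have
diameter at most `ε`. Given a nondegenerate continuum, either some nondegenerate continuum is
unstable for `T⁻¹`, or one that is unstable for `T` arises as a limit (in the Vietoris topology) of
forward iterates of smaller and smaller subcontinua, stopped just before their diameter exceeds `ε`.
So it suffices to exclude nondegenerate unstable continua.

Let `O` be the orbit of `p`. By expansivity an unstable continuum grows, in a time bounded in terms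
of its diameter, until its diameter exceeds `ε`; boundary bumping then gives a subcontinuum of
definite diameter at a definite distance from `O`, which is again unstable. Iterating this forever
gives points in each such continuum whose forward orbit stays away from `p`. Iterating it `n` times
and letting `n` tend to infinity gives an unstable continuum `L` all of whose backward iterates stay
away from `p`. Two periodic points of `L` would stay `ε`-close for all time, so `L` contains at most
one, and some nondegenerate subcontinuum `D` of `L` contains none. Growing `D` gives a point `y ∈ D`
whose past and eventual future both stay away from `p`. As `y` is not periodic, the closure of its
orbit is infinite and misses `p`, a contradiction.
-/

open Set MeasureTheory

open Filter Topology Uniformity TopologicalSpace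

/-! ### Continua -/

/-- A continuum, as a subset of an ambient space: a nonempty compact connected set. -/
structure IsContinuum {X : Type*} [TopologicalSpace X] (K : Set X) : Prop where
  isCompact : IsCompact K
  isConnected : IsConnected K

namespace IsContinuum

variable {X Y : Type*} [TopologicalSpace X] [TopologicalSpace Y]

theorem image {K : Set X} (hK : IsContinuum K) {f : X → Y} (hf : Continuous f) :
    IsContinuum (f '' K) :=
  ⟨hK.isCompact.image hf, hK.isConnected.image f hf.continuousOn⟩

end IsContinuum

section Separation

variable {X : Type*} [TopologicalSpace X] [T2Space X]

theorem exists_isClopen_of_forall_notMem_connectedComponent [CompactSpace X] {A B : Set X}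
    (hA : IsClosed A) (hB : IsClosed B) (h : ∀ a ∈ A, ∀ b ∈ B, b ∉ connectedComponent a) :
    ∃ Z : Set X, IsClopen Z ∧ A ⊆ Z ∧ Disjoint B Z := by
  let π : X → ConnectedComponents X := ConnectedComponents.mk
  have hπ : Continuous π := ConnectedComponents.continuous_coe
  have hsub : π '' A ⊆ (π '' B)ᶜ := by
    rintro _ ⟨a, ha, rfl⟩ ⟨b, hb, hab⟩
    exact h a ha b hb (ConnectedComponents.coe_eq_coe'.1 hab)
  -- The space of components is profinite, so its clopen sets separate disjoint closed sets.
  obtain ⟨Z, hZ, hAZ, hZB⟩ := exists_clopen_of_closed_subset_open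
    (hA.isCompact.image hπ).isClosed (hB.isCompact.image hπ).isClosed.isOpen_compl hsub
  exact ⟨π ⁻¹' Z, hZ.preimage hπ, image_subset_iff.1 hAZ,
    disjoint_left.2 fun b hb hbZ => hZB hbZ (mem_image_of_mem π hb)⟩

theorem exists_isClosed_partition_of_isCompact {K A B : Set X} (hK : IsCompact K)
    (hA : IsClosed A) (hB : IsClosed B)
    (h : ∀ D ⊆ K, IsContinuum D → (D ∩ A).Nonempty → ¬ (D ∩ B).Nonempty) :
    ∃ P Q : Set X, IsClosed P ∧ IsClosed Q ∧ Disjoint P Q ∧ P ∪ Q = K ∧ K ∩ A ⊆ P ∧ K ∩ B ⊆ Q := by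
  have := isCompact_iff_compactSpace.1 hK
  obtain ⟨Z, hZ, hAZ, hBZ⟩ := exists_isClopen_of_forall_notMem_connectedComponent
    (hA.preimage (continuous_subtype_val (p := (· ∈ K)))) (hB.preimage continuous_subtype_val)
    fun a ha b hb hab => h ((↑) '' connectedComponent a) (Subtype.coe_image_subset K _)
      (IsContinuum.image ⟨isClosed_connectedComponent.isCompact, isConnected_connectedComponent⟩
        continuous_subtype_val)
      ⟨a, mem_image_of_mem _ mem_connectedComponent, ha⟩ ⟨b, mem_image_of_mem _ hab, hb⟩
  have hval : IsClosedMap ((↑) : K → X) := hK.isClosed.isClosedMap_subtype_val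
  refine ⟨(↑) '' Z, (↑) '' Zᶜ, hval Z hZ.isClosed, hval Zᶜ hZ.compl.isClosed,
    disjoint_image_of_injective Subtype.val_injective disjoint_compl_right, ?_, ?_, ?_⟩
  · rw [← image_union, union_compl_self, image_univ, Subtype.range_coe]
  · exact fun x ⟨hxK, hxA⟩ => ⟨⟨x, hxK⟩, hAZ hxA, rfl⟩
  · exact fun x ⟨hxK, hxB⟩ => ⟨⟨x, hxK⟩, disjoint_left.1 hBZ hxB, rfl⟩

theorem IsContinuum.exists_subset_inter {C A F B : Set X} (hC : IsContinuum C) (hA : IsClosed A)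
    (hF : IsClosed F) (hB : IsClosed B) (hAB : Disjoint A B) (hcover : C ⊆ A ∪ F ∪ B)
    (hCA : (C ∩ A).Nonempty) (hCB : (C ∩ B).Nonempty) :
    ∃ D ⊆ C ∩ F, IsContinuum D ∧ (D ∩ A).Nonempty ∧ (D ∩ B).Nonempty := by
  by_contra! hno
  obtain ⟨P, Q, hP, hQ, hPQ, hPQK, hAP, hBQ⟩ :=
    exists_isClosed_partition_of_isCompact (hC.isCompact.inter_right hF) hA hB
      fun D hD hDc hDA => not_nonempty_iff_eq_empty.2 (hno D hD hDc hDA)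
  have hcover' : C ⊆ (A ∪ P) ∪ (B ∪ Q) := by
    intro x hx
    rcases hcover hx with (hxA | hxF) | hxB
    · exact Or.inl (Or.inl hxA)
    · exact (hPQK.symm.subset ⟨hx, hxF⟩).imp Or.inr Or.inr
    · exact Or.inr (Or.inl hxB)
  obtain ⟨x, -, hxA | hxP, hxB | hxQ⟩ := isPreconnected_closed_iff.1
    hC.isConnected.isPreconnected _ _ (hA.union hP) (hB.union hQ) hcover'
    (hCA.mono (inter_subset_inter_right C subset_union_left))
    (hCB.mono (inter_subset_inter_right C subset_union_left))
  · exact disjoint_left.1 hAB hxA hxB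
  · exact disjoint_left.1 hPQ (hAP ⟨hPQK ▸ Or.inr hxQ, hxA⟩) hxQ
  · exact disjoint_left.1 hPQ hxP (hBQ ⟨hPQK ▸ Or.inl hxP, hxB⟩)
  · exact disjoint_left.1 hPQ hxP hxQ

theorem isClosed_setOf_isPreconnected : IsClosed {K : Compacts X | IsPreconnected (K : Set X)} := by
  rw [← isOpen_compl_iff, isOpen_iff_forall_mem_open]
  intro K hK
  rw [mem_compl_iff, mem_ofPred_eq,
    isPreconnected_iff_subset_of_fully_disjoint_closed K.isCompact.isClosed] at hK
  push Not at hK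
  obtain ⟨u, v, hu, hv, huv, hdisj, hKu, hKv⟩ := hK
  obtain ⟨U, V, hU, hV, hKU, hKV, hUV⟩ := SeparatedNhds.of_isCompact_isCompact
    (K.isCompact.inter_right hu) (K.isCompact.inter_right hv)
    (hdisj.mono inter_subset_right inter_subset_right)
  refine ⟨{L | (L : Set X) ⊆ U ∪ V} ∩ ({L | (↑L ∩ U).Nonempty} ∩ {L | (↑L ∩ V).Nonempty}),
    ?_, (Compacts.isOpen_subsets_of_isOpen (hU.union hV)).inter
      ((Compacts.isOpen_inter_nonempty_of_isOpen hU).inter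
        (Compacts.isOpen_inter_nonempty_of_isOpen hV)), ?_, ?_, ?_⟩
  · rintro L ⟨hLUV, hLU, hLV⟩ hL
    obtain ⟨x, -, hxU, hxV⟩ := hL U V hU hV hLUV hLU hLV
    exact disjoint_left.1 hUV hxU hxV
  · exact fun x hx => (huv hx).imp (fun h => hKU ⟨hx, h⟩) fun h => hKV ⟨hx, h⟩
  · obtain ⟨x, hx, hxv⟩ := not_subset.1 hKv
    exact ⟨x, hx, hKU ⟨hx, (huv hx).resolve_right hxv⟩⟩
  · obtain ⟨x, hx, hxu⟩ := not_subset.1 hKu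
    exact ⟨x, hx, hKV ⟨hx, (huv hx).resolve_left hxu⟩⟩

theorem exists_isContinuum_forall_prod_subset [CompactSpace X] {S : Set (X × X)}
    {R : ℕ → Set (X × X)} (hS : IsClosed S) (hR : ∀ n, IsClosed (R n)) (hanti : Antitone R)
    (h : ∀ n, ∃ K, IsContinuum K ∧ (K ×ˢ K ∩ S).Nonempty ∧ K ×ˢ K ⊆ R n) :
    ∃ K, IsContinuum K ∧ (K ×ˢ K ∩ S).Nonempty ∧ ∀ n, K ×ˢ K ⊆ R n := by
  let t : ℕ → Set (Compacts X) := fun n =>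
    {K | IsPreconnected (K : Set X)} ∩ ({K | (↑(K ×ˢ K) ∩ S).Nonempty} ∩ {K | ↑(K ×ˢ K) ⊆ R n})
  have hsq : Continuous fun K : Compacts X => K ×ˢ K :=
    Compacts.continuous_prod.comp (continuous_id.prodMk continuous_id)
  have ht : ∀ n, IsClosed (t n) := fun n => isClosed_setOf_isPreconnected.inter
    (((Compacts.isClosed_inter_nonempty_of_isClosed hS).preimage hsq).inter
      ((Compacts.isClosed_subsets_of_isClosed (hR n)).preimage hsq))
  have hne : ∀ n, (t n).Nonempty := fun n => by
    obtain ⟨K, hK, hKS, hKR⟩ := h n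
    exact ⟨⟨K, hK.isCompact⟩, hK.isConnected.isPreconnected, hKS, hKR⟩
  obtain ⟨K, hK⟩ := IsCompact.nonempty_iInter_of_sequence_nonempty_isCompact_isClosed t
    (fun n K hK => ⟨hK.1, hK.2.1, hK.2.2.trans (hanti n.le_succ)⟩) hne (ht 0).isCompact ht
  rw [mem_iInter] at hK
  obtain ⟨p, hp, hpS⟩ := (hK 0).2.1
  exact ⟨K, ⟨K.isCompact, ⟨p.1, hp.1⟩, (hK 0).1⟩, ⟨p, hp, hpS⟩, fun n => (hK n).2.2⟩

end Separation

section PseudoMetric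

variable {X : Type*} [PseudoMetricSpace X]

theorem exists_annulus_disjoint_finset (O : Finset X) (u : X) {w : ℝ} (hw : 0 < w) :
    ∃ j : ℕ, j ≤ O.card ∧ ∀ o ∈ O, dist u o < j * w ∨ (j + 1) * w ≤ dist u o := by
  classical
  obtain ⟨j, hj, hjO⟩ := Finset.exists_mem_notMem_of_card_lt_card
    (s := O.image fun o => ⌊dist u o / w⌋₊) (t := Finset.range (O.card + 1))
    (by simpa using Nat.lt_succ_of_le Finset.card_image_le)
  refine ⟨j, Nat.lt_succ_iff.1 (Finset.mem_range.1 hj), fun o ho => ?_⟩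
  by_contra! hcon
  refine hjO (Finset.mem_image.2 ⟨o, ho, ?_⟩)
  rw [Nat.floor_eq_iff (by positivity)]
  exact ⟨(le_div_iff₀ hw).2 hcon.1, (div_lt_iff₀ hw).2 hcon.2⟩

end PseudoMetric

section Metric

variable {X : Type*} [MetricSpace X]

theorem nontrivial_of_exists_le_dist {E : Set X} {h : ℝ} (hh : 0 < h)
    (hE : ∃ x ∈ E, ∃ y ∈ E, h ≤ dist x y) : E.Nontrivial := by
  obtain ⟨x, hx, y, hy, hxy⟩ := hE
  exact ⟨x, hx, y, hy, dist_pos.1 (hh.trans_le hxy)⟩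

theorem IsContinuum.exists_subset_annulus {C : Set X} (hC : IsContinuum C) {c d : X} (hc : c ∈ C)
    (hd : d ∈ C) {s t : ℝ} (hs : 0 ≤ s) (hst : s < t) (ht : t ≤ dist c d) :
    ∃ D ⊆ C, IsContinuum D ∧ (∀ x ∈ D, dist c x ∈ Icc s t) ∧
      ∃ x ∈ D, ∃ y ∈ D, t - s ≤ dist x y := by
  have hg : Continuous fun x => dist c x := continuous_const.dist continuous_id
  obtain ⟨D, hD, hDc, ⟨x, hx, hxs⟩, ⟨y, hy, hyt⟩⟩ := hC.exists_subset_inter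
    (isClosed_Iic.preimage hg) (isClosed_Icc.preimage hg) (isClosed_Ici.preimage hg)
    (A := {x | dist c x ≤ s}) (F := {x | dist c x ∈ Icc s t}) (B := {x | t ≤ dist c x})
    (disjoint_left.2 fun x (hxs : _ ≤ s) (hxt : t ≤ _) => by linarith)
    (fun x _ => by simp only [mem_union, mem_ofPred_eq, mem_Icc]; grind)
    ⟨c, hc, by simpa using hs⟩ ⟨d, hd, ht⟩
  refine ⟨D, hD.trans inter_subset_left, hDc, fun x hx => (hD hx).2, x, hx, y, hy, ?_⟩
  have hxs : dist c x ≤ s := hxs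
  have hyt : t ≤ dist c y := hyt
  linarith [dist_triangle c x y]

theorem IsContinuum.exists_nontrivial_subset_notMem {C : Set X} (hC : IsContinuum C)
    (hCn : C.Nontrivial) (q : X) : ∃ D ⊆ C, IsContinuum D ∧ D.Nontrivial ∧ q ∉ D := by
  by_cases hq : q ∈ C
  · obtain ⟨z, hz, hzq⟩ := hCn.exists_ne q
    have hd : 0 < dist q z := dist_pos.2 hzq.symm
    obtain ⟨D, hDC, hD, hDq, hDs⟩ :=
      hC.exists_subset_annulus hq hz (half_pos hd).le (half_lt_self hd) le_rfl
    refine ⟨D, hDC, hD, nontrivial_of_exists_le_dist (by linarith) hDs, fun hqD => ?_⟩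
    have := (hDq q hqD).1
    rw [dist_self] at this
    linarith
  · exact ⟨C, Subset.rfl, hC, hCn, hq⟩

theorem IsContinuum.exists_subset_le_dist_finset {C : Set X} (hC : IsContinuum C) (O : Finset X)
    {x y : X} (hx : x ∈ C) (hy : y ∈ C) {ε h : ℝ} (hh : 0 < h) (hhε : 6 * (O.card + 1) * h ≤ ε)
    (hxy : ε ≤ dist x y) :
    ∃ D ⊆ C, IsContinuum D ∧ (∀ z ∈ D, ∀ w ∈ D, dist z w ≤ ε) ∧
      (∃ z ∈ D, ∃ w ∈ D, h ≤ dist z w) ∧ ∀ z ∈ D, ∀ o ∈ O, h ≤ dist z o := by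
  -- `D` crosses the middle third of an annulus around `x` of width `3 * h` that misses `O`.
  obtain ⟨j, hj, hjO⟩ := exists_annulus_disjoint_finset O x (w := 3 * h) (by positivity)
  have hjh : (j : ℝ) * h ≤ O.card * h := by gcongr
  have hj0 : 0 ≤ (j : ℝ) * h := by positivity
  obtain ⟨D, hDC, hD, hDx, a, ha, b, hb, hab⟩ := hC.exists_subset_annulus hx hy
    (s := 3 * (j * h) + h) (t := 3 * (j * h) + 2 * h) (by linarith) (by linarith) (by linarith)
  refine ⟨D, hDC, hD, fun z hz w hw => ?_, ⟨a, ha, b, hb, by linarith⟩,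
    fun z hz o ho => ?_⟩
  · linarith [dist_triangle_left z w x, (hDx z hz).2, (hDx w hw).2]
  · rcases hjO o ho with hin | hout
    · linarith [dist_triangle_right x z o, dist_triangle x o z, dist_comm o z, (hDx z hz).1]
    · linarith [dist_triangle x z o, (hDx z hz).2]

end Metric

/-! ### Periodic points of integer flows -/

section Periodic

variable {X : Type*} [TopologicalSpace X] {ϕ : Flow ℤ X}

theorem periodic_of_map_eq_self {k : ℤ} {p : X} (hp : ϕ k p = p) :
    Function.Periodic (fun n => ϕ n p) k := fun n => by
  simp only [ϕ.map_add, hp]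

theorem finite_orbit_of_map_eq_self {k : ℤ} (hk : 0 < k) {p : X} (hp : ϕ k p = p) :
    (ϕ.orbit p).Finite := by
  rw [ϕ.orbit_eq_range, ← (periodic_of_map_eq_self hp).image_Ioc hk 0]
  exact (finite_Ioc _ _).image _

theorem exists_pos_map_eq_self_of_finite_orbit {y : X} (hy : (ϕ.orbit y).Finite) :
    ∃ l > 0, ϕ l y = y := by
  obtain ⟨m, n, hmn, heq⟩ := hy.exists_lt_map_eq_of_forall_mem (f := fun n : ℤ => ϕ n y)
    (ϕ.mem_orbit y)
  refine ⟨n - m, sub_pos.2 hmn, ?_⟩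
  rw [sub_eq_neg_add, ϕ.map_add, ← heq, ← ϕ.map_add, neg_add_cancel, ϕ.map_zero_apply]

theorem exists_pos_map_eq_self_of_forall_mem [T1Space X] {k : ℤ} (hk : 0 < k) {p : X}
    (hp : ϕ k p = p) (hfin : ∀ B, IsClosed B → IsInvariant ϕ B → p ∉ B → B.Finite) {A : Set X}
    (hA : IsClosed A) (hpA : p ∉ A) {y : X} {n : ℤ} (hpast : ∀ i ≤ 0, ϕ i y ∈ A)
    (hfuture : ∀ i ≥ n, ϕ i y ∈ A) :
    ∃ l > 0, ϕ l y = y := by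
  refine exists_pos_map_eq_self_of_finite_orbit ?_
  by_cases hpy : p ∈ ϕ.orbit y
  · obtain ⟨i, rfl⟩ := ϕ.mem_orbit_iff.1 hpy
    refine (finite_orbit_of_map_eq_self hk hp).subset ?_
    rintro _ ⟨j, rfl⟩
    exact ϕ.mem_orbit_iff.2 ⟨j - i, by rw [← ϕ.map_add, sub_add_cancel]; rfl⟩
  · have hsub : closure (ϕ.orbit y) ⊆ A ∪ (fun i => ϕ i y) '' Icc 0 n := by
      refine closure_minimal ?_ (hA.union ((finite_Icc 0 n).image _).isClosed)
      rintro _ ⟨i, rfl⟩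
      rcases le_total i 0 with hi | hi
      · exact Or.inl (hpast i hi)
      · rcases le_total n i with hin | hin
        exacts [Or.inl (hfuture i hin), Or.inr ⟨i, ⟨hi, hin⟩, rfl⟩]
    refine (hfin (closure (ϕ.orbit y)) isClosed_closure
      (fun i => (ϕ.isInvariant_orbit y i).closure (ϕ.continuous_toFun i)) fun hpc => ?_).subset
      subset_closure
    rcases hsub hpc with hpA' | ⟨i, -, rfl⟩
    exacts [hpA hpA', hpy (ϕ.mem_orbit y i)]

end Periodic

/-! ### Unstable continua -/

section Dynamics

variable {X : Type*} [MetricSpace X] {ϕ : Flow ℤ X} {ε h : ℝ} {E : Set X}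

/-- `ε` is an expansivity constant of `ϕ`: no two distinct points stay `ε`-close for all time. -/
structure IsExpansivityConstant (ϕ : Flow ℤ X) (ε : ℝ) : Prop where
  pos : 0 < ε
  exists_lt_dist : ∀ x y, x ≠ y → ∃ n : ℤ, ε < dist (ϕ n x) (ϕ n y)

/-- The image of `E` at time `n` has diameter at most `ε`. Stated for pairs of points, so that it
makes sense without a boundedness assumption. -/
def IsSmallAt (ϕ : Flow ℤ X) (ε : ℝ) (E : Set X) (n : ℤ) : Prop :=
  ∀ x ∈ E, ∀ y ∈ E, dist (ϕ n x) (ϕ n y) ≤ ε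

/-- An `ε`-unstable set: its diameter has been at most `ε` throughout the past. An `ε`-unstable set
of `ϕ.reverse` is an `ε`-stable set of `ϕ`. -/
def IsUnstable (ϕ : Flow ℤ X) (ε : ℝ) (E : Set X) : Prop :=
  ∀ n ≤ 0, IsSmallAt ϕ ε E n

theorem IsExpansivityConstant.reverse (hε : IsExpansivityConstant ϕ ε) :
    IsExpansivityConstant ϕ.reverse ε where
  pos := hε.pos
  exists_lt_dist x y hxy :=
    let ⟨n, hn⟩ := hε.exists_lt_dist x y hxy
    ⟨-n, by simpa using hn⟩

theorem IsExpansivityConstant.exists_forall_le_dist_imp [CompactSpace X]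
    (hε : IsExpansivityConstant ϕ ε) (hh : 0 < h) :
    ∃ N : ℤ, ∀ x y, h ≤ dist x y → ∃ n ≤ N, ε < dist (ϕ n x) (ϕ n y) := by
  let W : ℤ → Set (X × X) := fun N => ⋃ n ≤ N, {p | ε < dist (ϕ n p.1) (ϕ n p.2)}
  have hW : ∀ N, IsOpen (W N) := fun N =>
    isOpen_biUnion fun n _ => isOpen_lt continuous_const (by fun_prop)
  have hmono : Monotone W := fun M N hMN =>
    biUnion_subset_biUnion_left fun _ (hn : _ ≤ M) => hn.trans hMN
  have hfar : IsCompact {p : X × X | h ≤ dist p.1 p.2} :=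
    (isClosed_le continuous_const continuous_dist).isCompact
  have hcover : {p : X × X | h ≤ dist p.1 p.2} ⊆ ⋃ N, W N := fun p hp => by
    obtain ⟨n, hn⟩ := hε.exists_lt_dist p.1 p.2 (dist_pos.1 (hh.trans_le hp))
    exact mem_iUnion.2 ⟨n, mem_iUnion₂.2 ⟨n, le_rfl, hn⟩⟩
  obtain ⟨N, hN⟩ := hfar.elim_directed_cover W hW hcover hmono.directed_le
  refine ⟨N, fun x y hxy => ?_⟩
  obtain ⟨n, hnN, hn⟩ := mem_iUnion₂.1 (hN (a := (x, y)) hxy)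
  exact ⟨n, hnN, hn⟩

theorem IsSmallAt.mono {D : Set X} {n : ℤ} (hE : IsSmallAt ϕ ε E n) (hDE : D ⊆ E) :
    IsSmallAt ϕ ε D n :=
  fun x hx y hy => hE x (hDE hx) y (hDE hy)

theorem isSmallAt_image {m n : ℤ} :
    IsSmallAt ϕ ε (ϕ m '' E) n ↔ IsSmallAt ϕ ε E (n + m) := by
  simp only [IsSmallAt, forall_mem_image, ϕ.map_add]

theorem exists_first_not_isSmallAt {M : ℤ} (hM : 0 ≤ M) (hEM : ¬ IsSmallAt ϕ ε E M) :
    ∃ n, 0 ≤ n ∧ n ≤ M ∧ ¬ IsSmallAt ϕ ε E n ∧ ∀ i, 0 ≤ i → i < n → IsSmallAt ϕ ε E i := by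
  obtain ⟨n, ⟨hn, hEn⟩, hmin⟩ := Int.exists_least_of_bdd
    (P := fun n => 0 ≤ n ∧ ¬ IsSmallAt ϕ ε E n) ⟨0, fun _ hz => hz.1⟩ ⟨M, hM, hEM⟩
  refine ⟨n, hn, hmin M ⟨hM, hEM⟩, hEn, fun i hi hin => ?_⟩
  by_contra hEi
  exact (hmin i ⟨hi, hEi⟩).not_gt hin

theorem IsUnstable.mono {D : Set X} (hE : IsUnstable ϕ ε E) (hDE : D ⊆ E) : IsUnstable ϕ ε D :=
  fun n hn => (hE n hn).mono hDE

theorem IsUnstable.pos_of_lt_dist (hE : IsUnstable ϕ ε E) {x y : X} (hx : x ∈ E) (hy : y ∈ E)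
    {n : ℤ} (hn : ε < dist (ϕ n x) (ϕ n y)) : 0 < n := by
  by_contra! hn0
  exact (hE n hn0 x hx y hy).not_gt hn

theorem IsUnstable.eq_of_periodic (hε : IsExpansivityConstant ϕ ε) (hE : IsUnstable ϕ ε E)
    {p q : X} (hpE : p ∈ E) (hqE : q ∈ E) {k l : ℤ} (hk : 0 < k) (hl : 0 < l) (hp : ϕ k p = p)
    (hq : ϕ l q = q) : p = q := by
  by_contra hpq
  obtain ⟨n, hn⟩ := hε.exists_lt_dist p q hpq
  have hper : Function.Periodic (fun n => dist (ϕ n p) (ϕ n q)) (k * l) := fun n => by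
    have hp' := (periodic_of_map_eq_self hp).int_mul l n
    have hq' := (periodic_of_map_eq_self hq).int_mul k n
    simp only [Int.cast_id] at hp' hq'
    simp only [mul_comm k l, hp']
    rw [mul_comm l k, hq']
  obtain ⟨m, hm, hnm⟩ := hper.exists_mem_Ioc (mul_pos hk hl) n (-(k * l))
  have hm0 : m ≤ 0 := by simpa using hm.2
  exact (hE m hm0 p hpE q hqE).not_gt (hnm ▸ hn)

/-- A subcontinuum `E` of the image of an unstable continuum, as produced by
`IsUnstable.exists_isDetached`: `E` is unstable again, has diameter at least `h` and keeps distance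
at least `h` from the finite set `O`. -/
structure IsDetached (ϕ : Flow ℤ X) (ε h : ℝ) (O : Finset X) (E : Set X) : Prop where
  isContinuum : IsContinuum E
  isUnstable : IsUnstable ϕ ε E
  exists_le_dist : ∃ x ∈ E, ∃ y ∈ E, h ≤ dist x y
  le_dist : ∀ x ∈ E, ∀ o ∈ O, h ≤ dist x o

theorem IsUnstable.of_subset_image {D : Set X} {n : ℤ} (hE : IsUnstable ϕ ε E)
    (hEn : ∀ i, 0 ≤ i → i < n → IsSmallAt ϕ ε E i) (hD : D ⊆ ϕ n '' E) (hD0 : IsSmallAt ϕ ε D 0) :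
    IsUnstable ϕ ε D := by
  intro i hi
  rcases hi.eq_or_lt with rfl | hi
  · exact hD0
  · refine (isSmallAt_image.2 ?_).mono hD
    rcases le_total (i + n) 0 with hin | hin
    exacts [hE _ hin, hEn _ hin (by lia)]

theorem IsUnstable.exists_isDetached (hE : IsUnstable ϕ ε E) (hEc : IsContinuum E) (O : Finset X)
    (hh : 0 < h) (hhε : 6 * (O.card + 1) * h ≤ ε) {x y : X} (hx : x ∈ E) (hy : y ∈ E) {M : ℤ}
    (hxy : ε < dist (ϕ M x) (ϕ M y)) :
    ∃ n, 0 < n ∧ n ≤ M ∧ ∃ E' ⊆ ϕ n '' E, IsDetached ϕ ε h O E' := by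
  obtain ⟨n, -, hnM, hEn, hlt⟩ := exists_first_not_isSmallAt (hE.pos_of_lt_dist hx hy hxy).le
    fun hEM => (hEM x hx y hy).not_gt hxy
  have hn : 0 < n := lt_of_not_ge fun hn => hEn (hE n hn)
  obtain ⟨z, hz, w, hw, hzw⟩ : ∃ z ∈ E, ∃ w ∈ E, ε < dist (ϕ n z) (ϕ n w) := by
    simpa only [IsSmallAt, not_forall, not_le, exists_prop] using hEn
  obtain ⟨E', hE', hE'c, hE'ε, hE'h, hE'O⟩ :=
    (hEc.image (ϕ.continuous_toFun n)).exists_subset_le_dist_finset O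
      (mem_image_of_mem _ hz) (mem_image_of_mem _ hw) hh hhε hzw.le
  refine ⟨n, hn, hnM, E', hE', hE'c, hE.of_subset_image hlt hE' ?_, hE'h, hE'O⟩
  simpa only [IsSmallAt, ϕ.map_zero, id_eq] using hE'ε

theorem IsUnstable.exists_isDetached_of_nontrivial (hε : IsExpansivityConstant ϕ ε)
    (hE : IsUnstable ϕ ε E) (hEc : IsContinuum E) (hEn : E.Nontrivial) (O : Finset X) (hh : 0 < h)
    (hhε : 6 * (O.card + 1) * h ≤ ε) : ∃ n, ∃ E' ⊆ ϕ n '' E, IsDetached ϕ ε h O E' := by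
  obtain ⟨x, hx, y, hy, hxy⟩ := hEn
  obtain ⟨M, hM⟩ := hε.exists_lt_dist x y hxy
  obtain ⟨n, -, -, hn⟩ := hE.exists_isDetached hEc O hh hhε hx hy hM
  exact ⟨n, hn⟩

/-- A family of sets is renewing in `A` if the image of each member after some positive time
contains a member again, the former having moved within `A` until then. -/
def IsRenewing (ϕ : Flow ℤ X) (A : Set X) (𝒢 : Set (Set X)) : Prop :=
  ∀ E ∈ 𝒢, ∃ n > 0, (∀ i ∈ Icc 0 n, MapsTo (ϕ i) E A) ∧ ∃ E' ∈ 𝒢, E' ⊆ ϕ n '' E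

theorem exists_isClosed_isRenewing [CompactSpace X] (hε : IsExpansivityConstant ϕ ε)
    {O : Finset X} (hO : IsInvariant ϕ (O : Set X)) {p : X} (hp : p ∈ O) (hh : 0 < h)
    (hhε : 6 * (O.card + 1) * h ≤ ε) :
    ∃ A, IsClosed A ∧ p ∉ A ∧ IsRenewing ϕ A {E | IsDetached ϕ ε h O E} := by
  obtain ⟨N, hN⟩ := hε.exists_forall_le_dist_imp hh
  let F : Set X := {x | ∀ o ∈ O, h ≤ dist x o}
  have hF : IsClosed F := by
    simp only [F, ofPred_forall]
    exact isClosed_biInter fun o _ => isClosed_le continuous_const (by fun_prop)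
  refine ⟨⋃ i ∈ Icc 0 N, ϕ i '' F,
    (finite_Icc 0 N).isClosed_biUnion fun i _ => (ϕ.toHomeomorph i).isClosedMap F hF, ?_, ?_⟩
  · simp only [mem_iUnion, ϕ.image_eq_preimage_symm]
    rintro ⟨i, -, hpF⟩
    have := hpF _ (hO (-i) hp)
    rw [dist_self] at this
    exact this.not_gt hh
  · intro E hE
    obtain ⟨x, hx, y, hy, hxy⟩ := hE.exists_le_dist
    obtain ⟨M, hMN, hM⟩ := hN x y hxy
    obtain ⟨n, hn, hnM, E', hE', hE'd⟩ :=
      hE.isUnstable.exists_isDetached hE.isContinuum O hh hhε hx hy hM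
    refine ⟨n, hn, fun i hi z hz => ?_, E', hE'd, hE'⟩
    exact mem_biUnion ⟨hi.1, hi.2.trans (hnM.trans hMN)⟩ (mem_image_of_mem _ (hE.le_dist z hz))

namespace IsRenewing

variable {A : Set X} {𝒢 : Set (Set X)}

theorem exists_forall_mem_Icc (h𝒢 : IsRenewing ϕ A 𝒢) (hne : ∀ E ∈ 𝒢, E.Nonempty) (hE : E ∈ 𝒢)
    (n : ℕ) : ∃ x ∈ E, ∀ i ∈ Icc (0 : ℤ) n, ϕ i x ∈ A := by
  induction n generalizing E with
  | zero =>
    obtain ⟨x, hx⟩ := hne E hE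
    obtain ⟨n, hn, hEA, -⟩ := h𝒢 E hE
    exact ⟨x, hx, fun i hi => hEA i ⟨hi.1, hi.2.trans hn.le⟩ hx⟩
  | succ n ih =>
    obtain ⟨m, hm, hEA, E', hE', hE'E⟩ := h𝒢 E hE
    obtain ⟨x', hx', hx'A⟩ := ih hE'
    obtain ⟨x, hx, rfl⟩ := hE'E hx'
    refine ⟨x, hx, fun i hi => ?_⟩
    rcases le_total i m with him | hmi
    · exact hEA i ⟨hi.1, him⟩ hx
    · have := hx'A (i - m) (by grind)
      rwa [← ϕ.map_add, sub_add_cancel] at this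

theorem exists_forall_nonneg_mem (h𝒢 : IsRenewing ϕ A 𝒢) (hA : IsClosed A)
    (hne : ∀ E ∈ 𝒢, E.Nonempty) (hE : E ∈ 𝒢) (hEc : IsCompact E) :
    ∃ x ∈ E, ∀ i ≥ 0, ϕ i x ∈ A := by
  let t : ℕ → Set X := fun n => E ∩ ⋂ i ∈ Icc (0 : ℤ) n, ϕ i ⁻¹' A
  have ht : ∀ n, IsClosed (⋂ i ∈ Icc (0 : ℤ) n, ϕ i ⁻¹' A) := fun n =>
    isClosed_biInter fun i _ => hA.preimage (ϕ.continuous_toFun i)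
  have htc : ∀ n, IsCompact (t n) := fun n => hEc.inter_right (ht n)
  obtain ⟨x, hx⟩ := IsCompact.nonempty_iInter_of_sequence_nonempty_isCompact_isClosed t
    (fun n => inter_subset_inter_right E <| biInter_subset_biInter_left <|
      Icc_subset_Icc_right (by simp))
    (fun n => by
      obtain ⟨x, hx, hxA⟩ := h𝒢.exists_forall_mem_Icc hne hE n
      exact ⟨x, hx, mem_iInter₂.2 hxA⟩)
    (htc 0) fun n => (htc n).isClosed
  rw [mem_iInter] at hx
  exact ⟨x, (hx 0).1, fun i hi => mem_iInter₂.1 (hx i.toNat).2 i ⟨hi, Int.self_le_toNat i⟩⟩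

theorem exists_forall_mapsTo (h𝒢 : IsRenewing ϕ A 𝒢) (hne : 𝒢.Nonempty) (n : ℕ) :
    ∃ E ∈ 𝒢, ∀ i ∈ Icc (-n : ℤ) 0, MapsTo (ϕ i) E A := by
  induction n with
  | zero =>
    obtain ⟨E, hE⟩ := hne
    obtain ⟨m, hm, hEA, -⟩ := h𝒢 E hE
    exact ⟨E, hE, fun i hi => hEA i (by grind)⟩
  | succ n ih =>
    obtain ⟨E, hE, hEn⟩ := ih
    obtain ⟨m, hm, hEA, E', hE', hE'E⟩ := h𝒢 E hE
    refine ⟨E', hE', fun i hi x' hx' => ?_⟩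
    obtain ⟨x, hx, rfl⟩ := hE'E hx'
    rw [← ϕ.map_add]
    rcases le_total (i + m) 0 with him | him
    · exact hEn _ (by grind) hx
    · exact hEA _ (by grind) hx

end IsRenewing

theorem exists_isUnstable_mapsTo [CompactSpace X] {A : Set X} (hA : IsClosed A) (hh : 0 < h)
    (hK : ∀ n : ℕ, ∃ K, IsContinuum K ∧ (∃ x ∈ K, ∃ y ∈ K, h ≤ dist x y) ∧
      ∀ i ∈ Icc (-n : ℤ) 0, IsSmallAt ϕ ε K i ∧ MapsTo (ϕ i) K A) :
    ∃ K, IsContinuum K ∧ K.Nontrivial ∧ IsUnstable ϕ ε K ∧ ∀ i ≤ 0, MapsTo (ϕ i) K A := by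
  let R : ℕ → Set (X × X) := fun n =>
    ⋂ i ∈ Icc (-n : ℤ) 0, {p | dist (ϕ i p.1) (ϕ i p.2) ≤ ε} ∩ {p | ϕ i p.1 ∈ A}
  have hR : ∀ n, IsClosed (R n) := fun n => isClosed_biInter fun i _ =>
    (isClosed_le (by fun_prop) continuous_const).inter
      (hA.preimage ((ϕ.continuous_toFun i).comp continuous_fst))
  have hanti : Antitone R := fun m n hmn =>
    biInter_subset_biInter_left (Icc_subset_Icc_left (by gcongr))
  obtain ⟨K, hKc, ⟨⟨x, y⟩, ⟨hx, hy⟩, hxy⟩, hKR⟩ := exists_isContinuum_forall_prod_subset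
    (S := {p | h ≤ dist p.1 p.2}) (isClosed_le continuous_const continuous_dist) hR hanti
    fun n => by
      obtain ⟨K, hKc, ⟨x, hx, y, hy, hxy⟩, hKn⟩ := hK n
      exact ⟨K, hKc, ⟨(x, y), ⟨hx, hy⟩, hxy⟩, fun p hp => mem_iInter₂.2 fun i hi =>
        ⟨(hKn i hi).1 _ hp.1 _ hp.2, (hKn i hi).2 hp.1⟩⟩
  have hKi : ∀ i ≤ 0, ∀ x ∈ K, ∀ y ∈ K, dist (ϕ i x) (ϕ i y) ≤ ε ∧ ϕ i x ∈ A :=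
    fun i hi x hx y hy => mem_iInter₂.1 (hKR i.natAbs (a := (x, y)) ⟨hx, hy⟩) i (by grind)
  exact ⟨K, hKc, nontrivial_of_exists_le_dist hh ⟨x, hx, y, hy, hxy⟩,
    fun i hi x hx y hy => (hKi i hi x hx y hy).1, fun i hi x hx => (hKi i hi x hx x hx).2⟩

theorem IsUnstable.exists_subset_forall_map_ne (hε : IsExpansivityConstant ϕ ε)
    (hE : IsUnstable ϕ ε E) (hEc : IsContinuum E) (hEn : E.Nontrivial) :
    ∃ D ⊆ E, IsContinuum D ∧ D.Nontrivial ∧ ∀ y ∈ D, ∀ l > 0, ϕ l y ≠ y := by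
  by_cases hper : ∃ q ∈ E, ∃ k > 0, ϕ k q = q
  · obtain ⟨q, hqE, k, hk, hq⟩ := hper
    obtain ⟨D, hDE, hD, hDn, hqD⟩ := hEc.exists_nontrivial_subset_notMem hEn q
    refine ⟨D, hDE, hD, hDn, fun y hy l hl hly => hqD ?_⟩
    rwa [hE.eq_of_periodic hε hqE (hDE hy) hk hl hq hly]
  · push Not at hper
    exact ⟨E, Subset.rfl, hEc, hEn, hper⟩

theorem IsUnstable.subsingleton [CompactSpace X] (hε : IsExpansivityConstant ϕ ε) {k : ℤ}
    (hk : 0 < k) {p : X} (hp : ϕ k p = p)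
    (hfin : ∀ B, IsClosed B → IsInvariant ϕ B → p ∉ B → B.Finite) (hE : IsUnstable ϕ ε E)
    (hEc : IsContinuum E) : E.Subsingleton := by
  by_contra hEs
  let O := (finite_orbit_of_map_eq_self hk hp).toFinset
  have hO : (O : Set X) = ϕ.orbit p := Finite.coe_toFinset _
  let h := ε / (6 * (O.card + 1))
  have hh : 0 < h := div_pos hε.pos (by positivity)
  have hhε : 6 * (O.card + 1) * h ≤ ε := (mul_div_cancel₀ ε (by positivity)).le
  obtain ⟨A, hA, hpA, hren⟩ := exists_isClosed_isRenewing hε (hO.symm ▸ ϕ.isInvariant_orbit p)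
    ((Finite.mem_toFinset _).2 (ϕ.mem_orbit_self p)) hh hhε
  obtain ⟨-, E₀, -, hE₀⟩ :=
    hE.exists_isDetached_of_nontrivial hε hEc (not_subsingleton_iff.1 hEs) O hh hhε
  obtain ⟨L, hLc, hLn, hL, hLA⟩ : ∃ L, IsContinuum L ∧ L.Nontrivial ∧ IsUnstable ϕ ε L ∧
      ∀ i ≤ 0, MapsTo (ϕ i) L A := exists_isUnstable_mapsTo hA hh fun n => by
    obtain ⟨K, hK, hKA⟩ := hren.exists_forall_mapsTo ⟨E₀, hE₀⟩ n
    exact ⟨K, hK.isContinuum, hK.exists_le_dist, fun i hi => ⟨hK.isUnstable i hi.2, hKA i hi⟩⟩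
  obtain ⟨D, hDL, hDc, hDn, hDper⟩ := hL.exists_subset_forall_map_ne hε hLc hLn
  obtain ⟨n, E', hE'D, hE'⟩ :=
    (hL.mono hDL).exists_isDetached_of_nontrivial hε hDc hDn O hh hhε
  obtain ⟨x, hx, hxA⟩ := hren.exists_forall_nonneg_mem hA
    (fun E hE => hE.isContinuum.isConnected.nonempty) hE' hE'.isContinuum.isCompact
  obtain ⟨y, hy, rfl⟩ := hE'D hx
  obtain ⟨l, hl, hly⟩ := exists_pos_map_eq_self_of_forall_mem hk hp hfin hA hpA
    (fun i hi => hLA i hi (hDL hy)) (n := n)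
    fun i hi => by simpa [← ϕ.map_add] using hxA (i - n) (sub_nonneg.2 hi)
  exact hDper y hy l hl hly

theorem IsContinuum.exists_nontrivial_subset_isSmallAt [CompactSpace X] (hε : 0 < ε)
    (hE : IsContinuum E) (hEn : E.Nontrivial) (n : ℤ) :
    ∃ D ⊆ E, IsContinuum D ∧ D.Nontrivial ∧ ∀ i ∈ Icc 0 n, IsSmallAt ϕ ε D i := by
  have hunif : ∀ᶠ q : X × X in 𝓤 X, ∀ i ∈ Icc 0 n, dist (ϕ i q.1) (ϕ i q.2) < ε :=
    (eventually_all_finite (finite_Icc 0 n)).2 fun i _ =>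
      CompactSpace.uniformContinuous_of_continuous (ϕ.continuous_toFun i)
        (Metric.dist_mem_uniformity hε)
  obtain ⟨δ, hδ, hδn⟩ := Metric.mem_uniformity_dist.1 hunif
  obtain ⟨c, hc, d, hd, hcd⟩ := hEn
  have ht : 0 < min (δ / 3) (dist c d) := lt_min (by positivity) (dist_pos.2 hcd)
  obtain ⟨D, hDE, hD, hDt, hDs⟩ := hE.exists_subset_annulus hc hd le_rfl ht (min_le_right _ _)
  refine ⟨D, hDE, hD, nontrivial_of_exists_le_dist (by rwa [sub_zero]) hDs,
    fun i hi x hx y hy => (hδn ?_ i hi).le⟩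
  have := min_le_left (δ / 3) (dist c d)
  linarith [dist_triangle_left x y c, (hDt x hx).2, (hDt y hy).2]

theorem IsContinuum.exists_isUnstable [CompactSpace X] (ϕ : Flow ℤ X) (hε : 0 < ε)
    (hE : IsContinuum E) (hEn : E.Nontrivial) :
    ∃ K, IsContinuum K ∧ K.Nontrivial ∧ (IsUnstable ϕ ε K ∨ IsUnstable ϕ.reverse ε K) := by
  by_contra! hno
  obtain ⟨δ, hδ, hδ₁⟩ := Metric.uniformContinuous_iff.1
    (CompactSpace.uniformContinuous_of_continuous (ϕ.continuous_toFun 1)) ε hε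
  obtain ⟨K, hK, hKn, hKu, -⟩ := exists_isUnstable_mapsTo (ϕ := ϕ) (ε := ε) isClosed_univ hδ
    fun n => by
      obtain ⟨D, -, hD, hDn, hDsmall⟩ :=
        hE.exists_nontrivial_subset_isSmallAt (ϕ := ϕ) hε hEn n
      obtain ⟨i, hi, hDi⟩ : ∃ i ≤ 0, ¬ IsSmallAt ϕ.reverse ε D i := by
        simpa only [IsUnstable, not_forall, exists_prop] using (hno D hD hDn).2
      obtain ⟨m, hm, -, hDm, hlt⟩ := exists_first_not_isSmallAt (ϕ := ϕ) (neg_nonneg.2 hi) hDi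
      have hnm : n < m := lt_of_not_ge fun hmn => hDm (hDsmall m ⟨hm, hmn⟩)
      -- The diameter is about to exceed `ε` at time `m - 1`, hence is bounded below there.
      refine ⟨ϕ (m - 1) '' D, hD.image (ϕ.continuous_toFun _), ?_, fun i hi =>
        ⟨isSmallAt_image.2 (hlt _ (by grind) (by grind)), mapsTo_univ _ _⟩⟩
      simp only [exists_mem_image]
      by_contra! hclose
      refine hDm fun x hx y hy => ?_
      have := hδ₁ (hclose x hx y hy)
      rw [← ϕ.map_add, ← ϕ.map_add, add_sub_cancel] at this
      exact this.le
  exact (hno K hK hKn).1 hKu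

theorem IsExpansivityConstant.totallyDisconnectedSpace [CompactSpace X]
    (hε : IsExpansivityConstant ϕ ε) {k : ℤ} (hk : 0 < k) {p : X} (hp : ϕ k p = p)
    (hfin : ∀ B, IsClosed B → IsInvariant ϕ B → p ∉ B → B.Finite) : TotallyDisconnectedSpace X := by
  rw [totallyDisconnectedSpace_iff_connectedComponent_subsingleton]
  intro x
  by_contra hx
  obtain ⟨K, hK, hKn, hKu | hKu⟩ := IsContinuum.exists_isUnstable ϕ hε.pos
    ⟨isClosed_connectedComponent.isCompact, isConnected_connectedComponent (x := x)⟩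
    (not_subsingleton_iff.1 hx)
  · exact hKn.not_subsingleton (hKu.subsingleton hε hk hp hfin hK)
  · refine hKn.not_subsingleton (hKu.subsingleton hε.reverse hk (p := p) ?_ ?_ hK)
    · rw [ϕ.reverse_apply, ← hp, ← ϕ.map_add, neg_add_cancel, ϕ.map_zero_apply, hp]
    · exact fun B hB hinv => hfin B hB fun i x hx => by simpa using hinv (-i) hx

end Dynamics

section Homeomorph

variable {X : Type*}

/-- The flow of iterates of a homeomorphism. -/
def zpowFlow [TopologicalSpace X] (T : X ≃ₜ X) : Flow ℤ X where
  toFun n := ⇑(T ^ n)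
  cont' := continuous_prod_of_discrete_left.2 fun n => (T ^ n).continuous
  map_add' m n x := by rw [zpow_add]; rfl
  map_zero' x := by rw [zpow_zero]; rfl

theorem not_totallyDisconnectedSpace (X : Type*) [TopologicalSpace X] [CompactSpace X]
    [LocallyConnectedSpace X] [Infinite X] : ¬ TotallyDisconnectedSpace X := fun _ =>
  Infinite.not_finite <| Finite.of_injective (ConnectedComponents.mk : X → ConnectedComponents X)
    fun x y hxy => by simpa using ConnectedComponents.coe_eq_coe'.1 hxy

theorem IsCAMZ.infinite [TopologicalSpace X] {T : X ≃ₜ X} (hT : IsCAMZ T) : Infinite X := by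
  by_contra hX
  have := not_infinite_iff_finite.1 hX
  have : Finite (X ≃ₜ X) := Finite.of_injective _ DFunLike.coe_injective
  obtain ⟨n, hn, hTn⟩ := isOfFinOrder_iff_pow_eq_one.1 (isOfFinOrder_of_finite T)
  exact hT.1 n (by exact_mod_cast hn.ne') (by rwa [zpow_natCast])

theorem IsCAMZ.exists_periodic [TopologicalSpace X] {T : X ≃ₜ X} (hT : IsCAMZ T) :
    ∃ p, (∃ k : ℕ, 0 < k ∧ (T ^ k) p = p) ∧
      ∀ A, IsClosed A → T '' A = A → p ∉ A → A.Finite := by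
  have := hT.infinite
  obtain ⟨-, -, hdense, hfin⟩ := id hT
  obtain ⟨p, hp⟩ := hdense.nonempty
  exact ⟨p, hp, fun A hA hTA hpA => hfin A hA hTA fun h => hpA (h ▸ mem_univ p)⟩

theorem statement10_general [MetricSpace X] [CompactSpace X] (T : X ≃ₜ X)
    (hexp : ∃ ε : ℝ, 0 < ε ∧ ∀ x y : X, x ≠ y → ∃ n : ℤ, ε < dist ((T ^ n) x) ((T ^ n) y))
    (hper : ∃ p, (∃ k : ℕ, 0 < k ∧ (T ^ k) p = p) ∧
      ∀ A, IsClosed A → T '' A = A → p ∉ A → A.Finite) :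
    TotallyDisconnectedSpace X := by
  obtain ⟨ε, hε, hexp⟩ := hexp
  obtain ⟨p, ⟨k, hk, hp⟩, hfin⟩ := hper
  refine IsExpansivityConstant.totallyDisconnectedSpace (ϕ := zpowFlow T) ⟨hε, hexp⟩
    (k := k) (by exact_mod_cast hk) (p := p) ?_ fun A hA hinv => hfin A hA ?_
  · change (T ^ (k : ℤ)) p = p
    rwa [zpow_natCast]
  · have : (T ^ (1 : ℤ)) '' A = A := ((zpowFlow T).isInvariant_iff_image_eq A).1 hinv 1
    rwa [zpow_one] at this

end Homeomorph

/-- A locally connected compact metric space supports no expansive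
chaotic almost minimal `ℤ`-action. -/
theorem statement10 {X : Type*} [MetricSpace X] [CompactSpace X]
    [LocallyConnectedSpace X] (T : X ≃ₜ X)
    (hexp : ∃ ε : ℝ, 0 < ε ∧
      ∀ x y : X, x ≠ y → ∃ n : ℤ, ε < dist ((T ^ n) x) ((T ^ n) y)) :
    ¬ IsCAMZ T := by
  intro hT
  have := hT.infinite
  exact not_totallyDisconnectedSpace X (statement10_general T hexp hT.exists_periodic)
end

section
/- Let X be an infinite compact metric space and T: X → X an expansive homeomorphism. Then X contains an aperiodic point, i.e., there exists x ∈ X such that T^n x ≠ x for all nonzero n ∈ ℤ. -/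
/-!
Let `g` be expansive at a non-isolated point `x`, and suppose that all points near `x` are periodic.
A power of `g` fixes `x`; replacing `g` by it, some compact neighborhood `K` of `x` contains no
complete orbit other than that of `x`. The complete orbit of a periodic point is its forward orbit
and also its backward orbit, so no other point of `K` has its backward orbit in `K`. By compactness,
if `j` is large, every point that has been in `K` for the last `j` steps stays in `K` at the next
one: these points form a forward invariant neighborhood of `x`. Their forward orbits lie in `K`, so
by periodicity they all equal `x`, and `x` is isolated: a contradiction.
-/

open Set MeasureTheory

open Filter MulAction
open scoped Topology Uniformity

section GroupAction

variable {G X : Type*} [Group G] [MulAction G X] {g : G} {x z : X} {K : Set X} {j k : ℕ}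

theorem period_eq_zero_iff_forall_zpow_smul_ne :
    period g z = 0 ↔ ∀ n : ℤ, n ≠ 0 → g ^ n • z ≠ z := by
  simp only [ne_eq, zpow_smul_eq_iff_period_dvd]
  refine ⟨fun h n hn hdvd => hn (by simpa [h] using hdvd), fun h => ?_⟩
  by_contra hpos
  exact h (period g z) (mod_cast hpos) dvd_rfl

theorem zpow_smul_mem_of_pow_smul_mem (hz : period g z ≠ 0) (hK : ∀ m : ℕ, g ^ m • z ∈ K)
    (n : ℤ) : g ^ n • z ∈ K := by
  have hmod : 0 ≤ n % (period g z : ℤ) := Int.emod_nonneg n (mod_cast hz)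
  rw [← zpow_mod_period_smul, ← Int.toNat_of_nonneg hmod, zpow_natCast]
  exact hK _

theorem zpow_smul_mem_of_inv_pow_smul_mem (hz : period g z ≠ 0)
    (hK : ∀ m : ℕ, g⁻¹ ^ m • z ∈ K) (n : ℤ) : g ^ n • z ∈ K := by
  have hmem := zpow_smul_mem_of_pow_smul_mem (by rwa [period_inv]) hK (-n)
  rwa [inv_zpow', neg_neg] at hmem

/-- The points that lie in `K` now and did so at each of the last `j` steps, where `g` moves time
forward by one step. -/
def backwardTrapped (g : G) (K : Set X) (j : ℕ) : Set X :=
  {z | ∀ i ≤ j, g⁻¹ ^ i • z ∈ K}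

theorem backwardTrapped_subset : backwardTrapped g K j ⊆ K := fun z hz => by
  simpa only [pow_zero, one_smul] using hz 0 j.zero_le

theorem backwardTrapped_antitone : Antitone (backwardTrapped g K) :=
  fun _ _ hij _ hz i hi => hz i (hi.trans hij)

theorem smul_mem_backwardTrapped (hz : z ∈ backwardTrapped g K j) (hgz : g • z ∈ K) :
    g • z ∈ backwardTrapped g K j
  | 0, _ => by rwa [pow_zero, one_smul]
  | i + 1, hi => by
    rw [pow_succ, mul_smul, inv_smul_smul]
    exact hz i (Nat.le_of_succ_le hi)

section TopologicalSpace

variable [TopologicalSpace X] [ContinuousConstSMul G X]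

theorem isClosed_backwardTrapped (hK : IsClosed K) : IsClosed (backwardTrapped g K j) := by
  simp only [backwardTrapped, ofPred_forall]
  exact isClosed_biInter fun i _ => hK.preimage (continuous_const_smul (g⁻¹ ^ i))

theorem backwardTrapped_mem_nhds (hx : g • x = x) (hK : K ∈ 𝓝 x) :
    backwardTrapped g K j ∈ 𝓝 x := by
  refine (eventually_all_finite (finite_le_nat j)).2 fun i _ => ?_
  have hfix : g⁻¹ ^ i • x = x := pow_mem (inv_mem (mem_stabilizer_iff.2 hx)) i
  exact (continuous_const_smul (g⁻¹ ^ i)).continuousAt.eventually_mem (by rwa [hfix])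

theorem exists_mapsTo_backwardTrapped (hx : g • x = x) (hKx : K ∈ 𝓝 x) (hK : IsCompact K)
    (hKc : IsClosed K) (hback : ∀ z, (∀ i : ℕ, g⁻¹ ^ i • z ∈ K) → z = x) :
    ∃ j, MapsTo (g • ·) (backwardTrapped g K j) (backwardTrapped g K j) := by
  let E : Set X := K \ (g • ·) ⁻¹' interior K
  have hE : IsCompact E := hK.diff (isOpen_interior.preimage (continuous_const_smul g))
  have hempty : E ∩ ⋂ j, backwardTrapped g K j = ∅ := by
    refine eq_empty_of_forall_notMem fun z ⟨hzE, hz⟩ => hzE.2 ?_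
    obtain rfl : z = x := hback z fun i => mem_iInter.1 hz i i le_rfl
    rwa [mem_preimage, hx, mem_interior_iff_mem_nhds]
  obtain ⟨j, hj⟩ := hE.elim_directed_family_closed _ (fun _ => isClosed_backwardTrapped hKc) hempty
    backwardTrapped_antitone.directed_ge
  refine ⟨j, fun z hz => smul_mem_backwardTrapped hz ?_⟩
  by_contra hgz
  exact eq_empty_iff_forall_notMem.1 hj z
    ⟨⟨backwardTrapped_subset hz, fun h => hgz (interior_subset h)⟩, hz⟩

theorem isOpen_singleton_of_period_ne_zero (hx : g • x = x) (hKx : K ∈ 𝓝 x) (hK : IsCompact K)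
    (hKc : IsClosed K) (hiso : ∀ z, (∀ n : ℤ, g ^ n • z ∈ K) → z = x)
    (hper : ∀ z ∈ K, period g z ≠ 0) : IsOpen {x} := by
  have hback (z : X) (hz : ∀ i : ℕ, g⁻¹ ^ i • z ∈ K) : z = x :=
    hiso z (zpow_smul_mem_of_inv_pow_smul_mem (hper z (by simpa using hz 0)) hz)
  obtain ⟨j, hj⟩ := exists_mapsTo_backwardTrapped hx hKx hK hKc hback
  have hsub : backwardTrapped g K j ⊆ {x} := fun z hz => by
    refine hiso z (zpow_smul_mem_of_pow_smul_mem (hper z (backwardTrapped_subset hz)) fun m => ?_)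
    rw [← smul_iterate_apply]
    exact backwardTrapped_subset (hj.iterate m hz)
  refine isOpen_iff_mem_nhds.2 ?_
  rintro _ rfl
  exact mem_of_superset (backwardTrapped_mem_nhds hx hKx) hsub

end TopologicalSpace

section UniformSpace

variable [UniformSpace X]

/-- Pointwise expansivity: the orbit of any point other than `x` is separated from the orbit of `x`
at some time, by an entourage that may depend on `x`. In a metric space, expansivity is the
same at all points with a common entourage `{p | dist p.1 p.2 ≤ ε}`. -/
def IsExpansiveAt (g : G) (x : X) : Prop :=
  ∃ V ∈ 𝓤 X, ∀ z ≠ x, ∃ n : ℤ, (g ^ n • x, g ^ n • z) ∉ V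

variable [ContinuousConstSMul G X]

theorem IsExpansiveAt.exists_mem_nhds_isolating (hg : IsExpansiveAt g x) (hk : k ≠ 0)
    (hkx : g ^ k • x = x) :
    ∃ U ∈ 𝓝 x, ∀ z, (∀ n : ℤ, (g ^ k) ^ n • z ∈ U) → z = x := by
  obtain ⟨V, hV, hsep⟩ := hg
  refine ⟨{z | ∀ r < k, (g ^ r • x, g ^ r • z) ∈ V}, ?_, fun z hz => ?_⟩
  · exact (eventually_all_finite (finite_lt_nat k)).2 fun r _ =>
      (continuous_const_smul (g ^ r)).continuousAt.eventually_mem (mem_nhds_left _ hV)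
  by_contra hne
  obtain ⟨n, hn⟩ := hsep z hne
  obtain ⟨r, hr⟩ := Int.eq_ofNat_of_zero_le (Int.emod_nonneg n (mod_cast hk : (k : ℤ) ≠ 0))
  have hrk : r < k := by
    have hlt := Int.emod_lt_of_pos n (show (0 : ℤ) < k by omega)
    omega
  have hgn : g ^ n = g ^ r * (g ^ k) ^ (n / k) := by
    rw [← zpow_natCast g r, ← zpow_natCast g k, ← zpow_mul, ← zpow_add, ← hr,
      Int.emod_add_mul_ediv]
  have hfix : (g ^ k) ^ (n / k) • x = x := zpow_mem (mem_stabilizer_iff.2 hkx) (n / k)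
  rw [hgn, mul_smul, mul_smul, hfix] at hn
  exact hn (hz (n / k) r hrk)

theorem statement12_general [WeaklyLocallyCompactSpace X] [(𝓝[≠] x).NeBot]
    (hg : IsExpansiveAt g x) : x ∈ closure {z | ∀ n : ℤ, n ≠ 0 → g ^ n • z ≠ z} := by
  simp only [← period_eq_zero_iff_forall_zpow_smul_ne, mem_closure_iff_frequently]
  intro hper
  obtain ⟨U, hU, hiso⟩ := hg.exists_mem_nhds_isolating hper.self_of_nhds (pow_period_smul g x)
  obtain ⟨K, ⟨hKx, hK, hKc⟩, hKU⟩ :=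
    (isCompact_isClosed_basis_nhds x).mem_iff.1 (inter_mem hU hper)
  refine not_isOpen_singleton x (isOpen_singleton_of_period_ne_zero (pow_period_smul g x) hKx hK hKc
    (fun z hz => hiso z fun n => (hKU (hz n)).1) fun z hz => ?_)
  refine (period_pos_of_fixed (Nat.pos_of_ne_zero (hKU hz).2) ?_).ne'
  rw [← pow_mul, mul_comm, pow_mul]
  exact pow_mem (mem_stabilizer_iff.2 (pow_period_smul g z)) _

end UniformSpace

theorem isExpansiveAt_of_forall_exists_lt_dist [PseudoMetricSpace X] {ε : ℝ} (hε : 0 < ε)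
    (hsep : ∀ z ≠ x, ∃ n : ℤ, ε < dist (g ^ n • x) (g ^ n • z)) : IsExpansiveAt g x :=
  ⟨_, Metric.dist_mem_uniformity hε, fun z hz => (hsep z hz).imp fun _ hn => hn.not_gt⟩

end GroupAction

section Homeomorph

variable {X : Type*} [TopologicalSpace X]

/-- The tautological action of the group of homeomorphisms, for the group structure
`homeomorphGroup`. -/
instance homeomorphMulAction : MulAction (X ≃ₜ X) X where
  smul f x := f x
  one_smul _ := rfl
  mul_smul _ _ _ := rfl

instance homeomorphContinuousConstSMul : ContinuousConstSMul (X ≃ₜ X) X where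
  continuous_const_smul f := f.continuous

end Homeomorph

/-- An expansive homeomorphism of an infinite compact metric space has an
aperiodic point. -/
theorem statement12 {X : Type*} [MetricSpace X] [CompactSpace X] [Infinite X]
    (T : X ≃ₜ X)
    (hexp : ∃ ε : ℝ, 0 < ε ∧
      ∀ x y : X, x ≠ y → ∃ n : ℤ, ε < dist ((T ^ n) x) ((T ^ n) y)) :
    ∃ x : X, ∀ n : ℤ, n ≠ 0 → (T ^ n) x ≠ x := by
  obtain ⟨ε, hε, hsep⟩ := hexp
  obtain ⟨x, _⟩ := exists_nhds_ne_neBot X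
  have hT : IsExpansiveAt T x :=
    isExpansiveAt_of_forall_exists_lt_dist hε fun z hz => hsep x z hz.symm
  exact closure_nonempty_iff.1 ⟨x, statement12_general hT⟩
end

section
/- Let T be a homeomorphism of a compact metric space X. If (X,T) is chaotic almost minimal, then (X,T) is weakly chaotic almost minimal. Conversely, if T is expansive and (X,T) is weakly chaotic almost minimal, then (X,T) is chaotic almost minimal. -/
/-!
A proper closed invariant set `A` of a weakly chaotic almost minimal system contains no dense orbit,
so it consists of periodic points. If `T` is expansive, distinct points of `A` separate at some
integer time, hence at some nonnegative time because the pair is periodic: `T` is positively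
expansive on `A`. An injective positively expansive map `f` of a compact space forces the space to
be finite. Indeed, by compactness there is `N` such that two points whose orbits are close at the
times `1, …, N` are already close at time `0`. Going backwards in time, points whose `k`-th iterates
stay close for time `N` were close at all the times `0, …, k`. So, once `k` is so large that the
points of a finite set `F` have separated by time `k`, the points `f^[k] x`, `x ∈ F`, are pairwise
separated within time `N`, and compactness bounds their number independently of `F`.
-/

open Set MeasureTheory

/-- A weakly chaotic almost minimal `ℤ`-system: faithful, topologically transitive,
dense periodic points, and every orbit is finite or dense. -/
def IsWeaklyCAMZ {X : Type*} [TopologicalSpace X] (T : X ≃ₜ X) : Prop :=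
  (∀ n : ℤ, n ≠ 0 → T ^ n ≠ 1) ∧
  (∀ U V : Set X, IsOpen U → IsOpen V → U.Nonempty → V.Nonempty →
      ∃ n : ℤ, ((T ^ n) '' U ∩ V).Nonempty) ∧
  Dense {x : X | ∃ k : ℕ, 0 < k ∧ (T ^ k) x = x} ∧
  ∀ x : X, (Set.range fun n : ℤ => (T ^ n) x).Finite ∨
    Dense (Set.range fun n : ℤ => (T ^ n) x)

open Function Dynamics
open scoped Uniformity

section PositivelyExpansive

variable {X : Type*} {f : X → X} {V : SetRel X X}

/-- A map is positively expansive if its forward iterates separate distinct points by a fixed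
entourage. In a metric space, the entourage plays the role of the expansivity constant. -/
def IsPositivelyExpansive [UniformSpace X] (f : X → X) : Prop :=
  ∃ V ∈ 𝓤 X, ∀ x y, x ≠ y → ∃ n : ℕ, (f^[n] x, f^[n] y) ∉ V

theorem isClosed_dynEntourage [TopologicalSpace X] (hf : Continuous f) (hV : IsClosed V) (n : ℕ) :
    IsClosed (dynEntourage f V n) :=
  isClosed_biInter fun k _ => hV.preimage ((hf.prodMap hf).iterate k)

theorem mem_dynEntourage_succ {x y : X} {n : ℕ} :
    (x, y) ∈ dynEntourage f V (n + 1) ↔ (x, y) ∈ V ∧ (f x, f y) ∈ dynEntourage f V n := by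
  simp only [mem_dynEntourage, Nat.forall_lt_succ_left, iterate_zero, id_eq, iterate_succ_apply]

theorem exists_mem_of_map_mem_dynEntourage [UniformSpace X] [CompactSpace X] (hf : Continuous f)
    (hinj : Injective f) (hVc : IsClosed V) {U : SetRel X X} (hU : U ∈ 𝓤 X)
    (hV : ∀ x y, x ≠ y → ∃ n : ℕ, (f^[n] x, f^[n] y) ∉ V) :
    ∃ N, ∀ x y, (f x, f y) ∈ dynEntourage f V N → (x, y) ∈ U := by
  let K : ℕ → Set (X × X) := fun n => Prod.map f f ⁻¹' dynEntourage f V n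
  have hK_anti : Antitone K := fun _ _ hmn => preimage_mono (dynEntourage_antitone f V hmn)
  have hK_closed (n : ℕ) : IsClosed (K n) :=
    (isClosed_dynEntourage hf hVc n).preimage (hf.prodMap hf)
  have hK_diag : ∀ z ∈ ⋂ n, K n, z.1 = z.2 := by
    intro z hz
    by_contra hne
    obtain ⟨n, hn⟩ := hV _ _ (hinj.ne hne)
    exact hn (mem_dynEntourage.mp (mem_iInter.mp hz (n + 1)) n n.lt_succ_self)
  obtain ⟨N, hN⟩ := exists_subset_nhds_of_compactSpace hK_anti.directed_ge hK_closed
    fun z hz => show U ∈ nhds (z.1, z.2) from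
      hK_diag z hz ▸ nhds_le_uniformity z.1 hU
  exact ⟨N, fun x y hxy => hN hxy⟩

theorem mem_dynEntourage_of_iterate_mem {N : ℕ}
    (hN : ∀ x y, (f x, f y) ∈ dynEntourage f V N → (x, y) ∈ V) {x y : X} {k : ℕ}
    (h : (f^[k] x, f^[k] y) ∈ dynEntourage f V N) : (x, y) ∈ dynEntourage f V (k + N) := by
  induction k generalizing x y with
  | zero => simpa only [iterate_zero, id_eq, zero_add] using h
  | succ k ih =>
    have hfxy : (f x, f y) ∈ dynEntourage f V (k + N) := ih h
    rw [Nat.add_right_comm, mem_dynEntourage_succ]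
    exact ⟨hN x y (dynEntourage_antitone f V (Nat.le_add_left N k) hfxy), hfxy⟩

theorem exists_forall_notMem_dynEntourage
    (hV : ∀ x y, x ≠ y → ∃ n : ℕ, (f^[n] x, f^[n] y) ∉ V) (F : Finset X) :
    ∃ k, ∀ x ∈ F, ∀ y ∈ F, x ≠ y → (x, y) ∉ dynEntourage f V k := by
  have hsep (x y : X) : ∀ᶠ k in Filter.atTop, x ≠ y → (x, y) ∉ dynEntourage f V k := by
    by_cases hxy : x = y
    · exact .of_forall fun _ hne => absurd hxy hne
    obtain ⟨n, hn⟩ := hV x y hxy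
    filter_upwards [Filter.eventually_gt_atTop n] with k hk _ hmem
    exact hn (mem_dynEntourage.mp hmem n hk)
  exact ((Filter.eventually_all_finset F).mpr fun x _ =>
    (Filter.eventually_all_finset F).mpr fun y _ => hsep x y).exists

theorem exists_ne_map_mem_of_totallyBounded {ι : Type*} [UniformSpace X] {s : Set X}
    (hs : TotallyBounded s) {W : SetRel X X} (hW : W ∈ 𝓤 X) :
    ∃ m : ℕ, ∀ (F : Finset ι) (g : ι → X), MapsTo g F s → m < F.card →
      ∃ i ∈ F, ∃ j ∈ F, i ≠ j ∧ (g i, g j) ∈ W := by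
  obtain ⟨U, hU, hU_symm, hUW⟩ := comp_symm_mem_uniformity_sets hW
  obtain ⟨t, ht, hst⟩ := hs U hU
  lift t to Finset X using ht
  refine ⟨t.card, fun F g hg hF => ?_⟩
  have hcenter (i : ι) (hi : i ∈ F) : ∃ c ∈ t, (g i, c) ∈ U := by
    simpa using hst (hg hi)
  obtain ⟨i₀, -⟩ := Finset.card_pos.mp (Nat.zero_lt_of_lt hF)
  have : Nonempty X := ⟨g i₀⟩
  choose! c hct hcU using hcenter
  obtain ⟨i, hi, j, hj, hij, hc⟩ := Finset.exists_ne_map_eq_of_card_lt_of_maps_to hF hct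
  exact ⟨i, hi, j, hj, hij, hUW ⟨c i, hcU i hi, hU_symm.symm _ _ (hc ▸ hcU j hj)⟩⟩

theorem IsPositivelyExpansive.finite [UniformSpace X] [CompactSpace X] (h : IsPositivelyExpansive f)
    (hf : Continuous f) (hinj : Injective f) : Finite X := by
  obtain ⟨V₀, hV₀, hsep₀⟩ := h
  obtain ⟨V, ⟨hV, hVc⟩, hVV₀⟩ := uniformity_hasBasis_closed.mem_iff.mp hV₀
  have hsep : ∀ x y, x ≠ y → ∃ n : ℕ, (f^[n] x, f^[n] y) ∉ V := fun x y hxy =>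
    (hsep₀ x y hxy).imp fun _ hn hmem => hn (hVV₀ hmem)
  obtain ⟨N, hN⟩ := exists_mem_of_map_mem_dynEntourage hf hinj hVc hV hsep
  have huc := CompactSpace.uniformContinuous_of_continuous hf
  obtain ⟨m, hm⟩ := exists_ne_map_mem_of_totallyBounded (ι := X)
    isCompact_univ.totallyBounded (dynEntourage_mem_uniformity huc hV N)
  by_contra hinf
  rw [not_finite_iff_infinite] at hinf
  obtain ⟨F, hF⟩ := Infinite.exists_subset_card_eq X (m + 1)
  obtain ⟨k, hk⟩ := exists_forall_notMem_dynEntourage hsep F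
  obtain ⟨x, hx, y, hy, hxy, hclose⟩ := hm F f^[k] (mapsTo_univ _ _) (by omega)
  exact hk x hx y hy hxy
    (dynEntourage_antitone f V (Nat.le_add_right k N) (mem_dynEntourage_of_iterate_mem hN hclose))

end PositivelyExpansive

section Homeomorph

variable {X : Type*} [TopologicalSpace X] {T : X ≃ₜ X} {A : Set X} {x : X}

theorem homeomorph_coe_zpow (T : X ≃ₜ X) (n : ℤ) :
    ⇑(T ^ n) = ⇑((T.toEquiv : Equiv.Perm X) ^ n) :=
  congrArg DFunLike.coe
    (map_zpow (⟨⟨Homeomorph.toEquiv, rfl⟩, fun _ _ => rfl⟩ : (X ≃ₜ X) →* Equiv.Perm X) T n)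

theorem homeomorph_zpow_natCast_apply (T : X ≃ₜ X) (n : ℕ) (x : X) :
    (T ^ (n : ℤ)) x = T^[n] x := by
  rw [homeomorph_coe_zpow, zpow_natCast, Equiv.Perm.coe_pow, Homeomorph.coe_toEquiv]

theorem image_range_zpow_apply (T : X ≃ₜ X) (x : X) :
    T '' range (fun n : ℤ => (T ^ n) x) = range fun n : ℤ => (T ^ n) x := by
  rw [← range_comp, ← (Equiv.addLeft (1 : ℤ)).surjective.range_comp fun n : ℤ => (T ^ n) x]
  congr 1
  ext n
  exact (congrArg (· x) (zpow_one_add T n)).symm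

theorem range_zpow_apply_subset (hA : T '' A = A) (hx : x ∈ A) :
    range (fun n : ℤ => (T ^ n) x) ⊆ A := by
  have hbij : BijOn (T.toEquiv : Equiv.Perm X) A A :=
    BijOn.mk (image_subset_iff.mp hA.subset) T.injective.injOn hA.superset
  rintro _ ⟨n, rfl⟩
  simpa only [homeomorph_coe_zpow] using (hbij.perm_zpow n).mapsTo hx

theorem mem_periodicPts_of_finite_range_zpow_apply
    (h : (range fun n : ℤ => (T ^ n) x).Finite) : x ∈ periodicPts T := by
  have hmem (n : ℕ) : T^[n] x ∈ range fun n : ℤ => (T ^ n) x :=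
    ⟨n, homeomorph_zpow_natCast_apply T n x⟩
  obtain ⟨m, n, hmn, heq⟩ := h.exists_lt_map_eq_of_forall_mem hmem
  exact mk_mem_periodicPts (Nat.sub_pos_of_lt hmn) (iterate_cancel T.injective heq.symm)

theorem zpow_apply_eq_iterate_of_isPeriodicPt {k : ℕ} (hk : 0 < k) (h : IsPeriodicPt T k x)
    (n : ℤ) : (T ^ n) x = T^[(n % k).toNat] x := by
  set σ : Equiv.Perm X := T.toEquiv
  have hσk : IsFixedPt (σ ^ k) x := by
    rwa [Equiv.Perm.coe_pow]
  have hmod : ((n % k).toNat : ℤ) = n % k :=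
    Int.toNat_of_nonneg (Int.emod_nonneg n (by omega))
  calc (T ^ n) x = (σ ^ (n % k + k * (n / k))) x := by
        rw [homeomorph_coe_zpow, Int.emod_add_mul_ediv]
    _ = (σ ^ (n % k)) (((σ ^ k) ^ (n / k)) x) := by
        rw [zpow_add, zpow_mul, zpow_natCast, Equiv.Perm.mul_apply]
    _ = (σ ^ (n % k)) x := by rw [hσk.perm_zpow]
    _ = T^[(n % k).toNat] x := by
        rw [← homeomorph_coe_zpow, ← homeomorph_zpow_natCast_apply, hmod]

theorem exists_iterate_eq_zpow_apply {y : X} (hx : x ∈ periodicPts T) (hy : y ∈ periodicPts T)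
    (n : ℤ) : ∃ m : ℕ, T^[m] x = (T ^ n) x ∧ T^[m] y = (T ^ n) y := by
  obtain ⟨k, hk, hkx⟩ := hx
  obtain ⟨l, hl, hly⟩ := hy
  have hkl : 0 < k * l := Nat.mul_pos hk hl
  exact ⟨(n % ↑(k * l)).toNat,
    (zpow_apply_eq_iterate_of_isPeriodicPt hkl (hkx.mul_const l) n).symm,
    (zpow_apply_eq_iterate_of_isPeriodicPt hkl (hly.const_mul k) n).symm⟩

theorem IsCAMZ.isWeaklyCAMZ (h : IsCAMZ T) : IsWeaklyCAMZ T := by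
  obtain ⟨hfaithful, htrans, hper, hfin⟩ := h
  refine ⟨hfaithful, htrans, hper, fun x => or_iff_not_imp_right.mpr fun hdense => ?_⟩
  refine (hfin (closure (range fun n : ℤ => (T ^ n) x)) isClosed_closure ?_ ?_).subset
    subset_closure
  · rw [T.image_closure, image_range_zpow_apply]
  · rwa [Ne, ← dense_iff_closure_eq]

theorem IsWeaklyCAMZ.subset_periodicPts (h : IsWeaklyCAMZ T) (hAc : IsClosed A)
    (hAT : T '' A = A) (hA : A ≠ univ) : A ⊆ periodicPts T := by
  intro x hx
  refine mem_periodicPts_of_finite_range_zpow_apply ((h.2.2.2 x).resolve_right fun hdense => hA ?_)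
  exact hAc.closure_eq ▸ (hdense.mono (range_zpow_apply_subset hAT hx)).closure_eq

end Homeomorph

section Expansive

variable {X : Type*}

/-- A homeomorphism is expansive if its integer powers separate distinct points by a fixed
entourage; `isExpansive_iff_dist` is the formulation with an expansivity constant. -/
def IsExpansive [UniformSpace X] (T : X ≃ₜ X) : Prop :=
  ∃ V ∈ 𝓤 X, ∀ x y, x ≠ y → ∃ n : ℤ, ((T ^ n) x, (T ^ n) y) ∉ V

theorem isExpansive_iff_dist [PseudoMetricSpace X] {T : X ≃ₜ X} :
    IsExpansive T ↔
      ∃ ε : ℝ, 0 < ε ∧ ∀ x y : X, x ≠ y → ∃ n : ℤ, ε < dist ((T ^ n) x) ((T ^ n) y) := by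
  refine (Metric.uniformity_basis_dist_le.exists_iff fun U V hUV hV x y hxy => ?_).trans ?_
  · exact (hV x y hxy).imp fun _ hn hmem => hn (hUV hmem)
  · simp only [mem_ofPred_eq, not_le]

variable [UniformSpace X] {T : X ≃ₜ X} {A : Set X}

theorem IsExpansive.isPositivelyExpansive_restrict (h : IsExpansive T) (hA : MapsTo T A A)
    (hper : A ⊆ periodicPts T) : IsPositivelyExpansive (hA.restrict T A A) := by
  obtain ⟨V, hV, hsep⟩ := h
  refine ⟨Prod.map Subtype.val Subtype.val ⁻¹' V, Filter.preimage_mem_comap hV, fun x y hxy => ?_⟩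
  obtain ⟨n, hn⟩ := hsep x y (Subtype.coe_ne_coe.mpr hxy)
  obtain ⟨m, hmx, hmy⟩ := exists_iterate_eq_zpow_apply (hper x.2) (hper y.2) n
  refine ⟨m, ?_⟩
  rwa [mem_preimage, Prod.map_apply, hA.coe_iterate_restrict, hA.coe_iterate_restrict, hmx, hmy]

theorem IsExpansive.finite_of_subset_periodicPts (h : IsExpansive T) (hAc : IsCompact A)
    (hA : MapsTo T A A) (hper : A ⊆ periodicPts T) : A.Finite := by
  have : CompactSpace A := isCompact_iff_compactSpace.mp hAc
  exact (h.isPositivelyExpansive_restrict hA hper).finite (T.continuous.restrict hA)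
    (hA.restrict_inj.mpr T.injective.injOn)

theorem IsWeaklyCAMZ.isCAMZ [CompactSpace X] (h : IsWeaklyCAMZ T) (hT : IsExpansive T) :
    IsCAMZ T := by
  refine ⟨h.1, h.2.1, h.2.2.1, fun A hAc hAT hA => ?_⟩
  exact hT.finite_of_subset_periodicPts hAc.isCompact (mapsTo_iff_image_subset.mpr hAT.subset)
    (h.subset_periodicPts hAc hAT hA)

theorem statement13_general [CompactSpace X] (T : X ≃ₜ X) :
    (IsCAMZ T → IsWeaklyCAMZ T) ∧ (IsExpansive T → IsWeaklyCAMZ T → IsCAMZ T) :=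
  ⟨IsCAMZ.isWeaklyCAMZ, fun hT h => h.isCAMZ hT⟩

end Expansive

/-- CAM implies weakly CAM; for expansive homeomorphisms, weakly CAM
implies CAM. -/
theorem statement13 {X : Type*} [MetricSpace X] [CompactSpace X] (T : X ≃ₜ X) :
    (IsCAMZ T → IsWeaklyCAMZ T) ∧
    ((∃ ε : ℝ, 0 < ε ∧
        ∀ x y : X, x ≠ y → ∃ n : ℤ, ε < dist ((T ^ n) x) ((T ^ n) y)) →
      IsWeaklyCAMZ T → IsCAMZ T) := by
  rw [← isExpansive_iff_dist]
  exact statement13_general T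
end

section
/- Let (X,T) be a chaotic almost minimal topological G-system and let H be a finite-index normal subgroup of G with left coset representatives g_1, …, g_m (so G = g_1 H ∪ … ∪ g_m H). Let Y ⊆ X be a compact H-invariant subset containing a point whose H-orbit is infinite. Then ⋃_{i=1}^m T_{g_i}(Y) = X, and the set of points of Y with finite H-orbit is dense in Y. -/
/-!
Let `Y` be closed and `H`-invariant. As `Y` is `H`-invariant, the union of its translates by coset
representatives is the union of all its `G`-translates, a `G`-invariant set; it is also closed, so
by almost minimality it is `X` as soon as `Y` is infinite.

For the density, let `y ∈ Y` have infinite `H`-orbit and apply this to the closure `Z ⊆ Y` of that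
orbit: finitely many translates of `Z` cover `X`, so by Baire `Z` has nonempty interior. This
interior is `H`-invariant and meets the dense orbit of `y`, so it contains `y`, and the points with
finite `G`-orbit, being dense in `X`, accumulate at `y` inside `Z`.
-/

open Set MeasureTheory

section GroupAction

open MulAction
open scoped Pointwise

variable {G X ι : Type*} [Group G] [MulAction G X]

theorem iUnion_transversal_smul_eq_iUnion_smul {H : Subgroup G} {g : ι → G}
    (hg : ∀ a : G, ∃ i, (g i)⁻¹ * a ∈ H) {Y : Set X} (hY : IsFixedBlock H Y) :
    ⋃ i, g i • Y = ⋃ a : G, a • Y := by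
  refine Subset.antisymm (iUnion_subset fun i => subset_iUnion (fun a : G => a • Y) (g i))
    (iUnion_subset fun a => ?_)
  obtain ⟨i, hi⟩ := hg a
  have hfix : ((g i)⁻¹ * a) • Y = Y := hY ⟨_, hi⟩
  have haY : a • Y = g i • Y := by rwa [mul_smul, inv_smul_eq_iff] at hfix
  exact haY ▸ subset_iUnion (fun i => g i • Y) i

variable (G) in
theorem isFixedBlock_iUnion_smul (Y : Set X) : IsFixedBlock G (⋃ a : G, a • Y) := fun b => by
  simp only [smul_set_iUnion, smul_smul]
  exact (Equiv.mulLeft b).surjective.iUnion_comp fun a => a • Y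

variable [TopologicalSpace X]

variable (G X) in
/-- An action is almost minimal if every proper closed invariant subset is finite. Invariance is
expressed by Mathlib's `MulAction.IsFixedBlock`, that is, `g • A = A` for all `g`. -/
def IsAlmostMinimal : Prop :=
  ∀ A : Set X, IsClosed A → IsFixedBlock G A → A ≠ univ → A.Finite

variable [ContinuousConstSMul G X]

theorem isFixedBlock_closure {A : Set X} (hA : IsFixedBlock G A) : IsFixedBlock G (closure A) :=
  fun a => by rw [← closure_smul, hA a]

theorem isFixedBlock_interior {A : Set X} (hA : IsFixedBlock G A) : IsFixedBlock G (interior A) :=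
  fun a => by rw [← interior_smul, hA a]

theorem interior_nonempty_of_iUnion_smul_eq_univ [BaireSpace X] [Nonempty X] [Countable ι]
    {g : ι → G} {Z : Set X} (hZ : IsClosed Z) (hcover : ⋃ i, g i • Z = univ) :
    (interior Z).Nonempty := by
  obtain ⟨i, hi⟩ := nonempty_interior_of_iUnion_of_closed (fun i => hZ.smul (g i)) hcover
  rwa [interior_smul, smul_set_nonempty] at hi

theorem mem_interior_closure_orbit_of_nonempty {y : X}
    (hne : (interior (closure (orbit G y))).Nonempty) : y ∈ interior (closure (orbit G y)) := by
  obtain ⟨z, hz⟩ := hne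
  obtain ⟨_, hay, a, rfl⟩ := mem_closure_iff.1 (interior_subset hz) _ isOpen_interior hz
  have hinv := isFixedBlock_interior (isFixedBlock_closure (IsFixedBlock.orbit (G := G) y))
  rwa [← hinv a, smul_mem_smul_set_iff] at hay

namespace IsAlmostMinimal

variable [Finite ι] {H : Subgroup G} {g : ι → G}

theorem iUnion_transversal_smul_eq_univ (hmin : IsAlmostMinimal G X)
    (hg : ∀ a : G, ∃ i, (g i)⁻¹ * a ∈ H) {Y : Set X} (hYclosed : IsClosed Y)
    (hYinv : IsFixedBlock H Y) (hYinf : Y.Infinite) : ⋃ i, g i • Y = univ := by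
  have hclosed : IsClosed (⋃ i, g i • Y) :=
    isClosed_iUnion_of_finite fun i => hYclosed.smul (g i)
  rw [iUnion_transversal_smul_eq_iUnion_smul hg hYinv] at hclosed ⊢
  by_contra hne
  have hsub : Y ⊆ ⋃ a : G, a • Y := by
    simpa only [one_smul] using subset_iUnion (fun a : G => a • Y) 1
  exact hYinf ((hmin _ hclosed (isFixedBlock_iUnion_smul G Y) hne).subset hsub)

theorem mem_interior_closure_orbit [BaireSpace X] (hmin : IsAlmostMinimal G X)
    (hg : ∀ a : G, ∃ i, (g i)⁻¹ * a ∈ H) {y : X} (hy : (orbit H y).Infinite) :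
    y ∈ interior (closure (orbit H y)) := by
  have : Nonempty X := ⟨y⟩
  have : ContinuousConstSMul H X := ⟨fun h => continuous_const_smul (h : G)⟩
  have hcover := hmin.iUnion_transversal_smul_eq_univ hg isClosed_closure
    (isFixedBlock_closure (IsFixedBlock.orbit y)) (hy.mono subset_closure)
  exact mem_interior_closure_orbit_of_nonempty
    (interior_nonempty_of_iUnion_smul_eq_univ isClosed_closure hcover)

theorem subset_closure_finite_orbit [BaireSpace X] (hmin : IsAlmostMinimal G X)
    (hdense : Dense {x : X | (orbit G x).Finite}) (hg : ∀ a : G, ∃ i, (g i)⁻¹ * a ∈ H)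
    {Y : Set X} (hYclosed : IsClosed Y) (hYinv : IsFixedBlock H Y) :
    Y ⊆ closure {z | z ∈ Y ∧ (orbit H z).Finite} := by
  intro y hy
  by_cases hfin : (orbit H y).Finite
  · exact subset_closure ⟨hy, hfin⟩
  have horbit : orbit H y ⊆ Y := range_subset_iff.2 fun h => hYinv h ▸ smul_mem_smul_set hy
  have hinterior : interior (closure (orbit H y)) ⊆ Y :=
    interior_subset.trans (closure_minimal horbit hYclosed)
  have hsub : interior (closure (orbit H y)) ∩ {x | (orbit G x).Finite} ⊆
      {z | z ∈ Y ∧ (orbit H z).Finite} := fun z hz =>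
    ⟨hinterior hz.1, Finite.subset hz.2 (orbit_subgroup_subset H z)⟩
  exact closure_mono hsub <|
    hdense.open_subset_closure_inter isOpen_interior (hmin.mem_interior_closure_orbit hg hfin)

end IsAlmostMinimal

theorem statement15_general [BaireSpace X] [Finite ι] (hmin : IsAlmostMinimal G X)
    (hdense : Dense {x : X | (orbit G x).Finite}) {H : Subgroup G} {g : ι → G}
    (hg : ∀ a : G, ∃ i, (g i)⁻¹ * a ∈ H) {Y : Set X} (hYclosed : IsClosed Y)
    (hYinv : IsFixedBlock H Y) :
    (Y.Infinite → ⋃ i, g i • Y = univ) ∧ Y ⊆ closure {z | z ∈ Y ∧ (orbit H z).Finite} :=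
  ⟨hmin.iUnion_transversal_smul_eq_univ hg hYclosed hYinv,
    hmin.subset_closure_finite_orbit hdense hg hYclosed hYinv⟩

end GroupAction

/-- The action `g • x = T g x` of `G` on `X` given by a homomorphism `T` into the homeomorphism
group, through which results on group actions apply to `T`. -/
abbrev homeomorphAction {G X : Type*} [Group G] [TopologicalSpace X] (T : G →* (X ≃ₜ X)) :
    MulAction G X where
  smul g x := T g x
  one_smul x := DFunLike.congr_fun (map_one T) x
  mul_smul a b x := DFunLike.congr_fun (map_mul T a b) x

/-- If `(X,T)` is a CAM `G`-system, `H` a finite-index normal subgroup of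
`G` with left coset representatives `g 1, …, g m`, and `Y ⊆ X` a compact `H`-invariant
subset containing a point with infinite `H`-orbit, then `⋃ᵢ T_{gᵢ}(Y) = X` and the
points of `Y` with finite `H`-orbit are dense in `Y`. -/
theorem statement15 {G X : Type*} [Group G] [MetricSpace X] [CompactSpace X]
    (T : G →* (X ≃ₜ X)) (hcam : IsCAM T)
    (H : Subgroup G) (hnorm : H.Normal)
    (m : ℕ) (g : Fin m → G)
    (hcoset : ∀ a : G, ∃ i : Fin m, (g i)⁻¹ * a ∈ H)
    (Y : Set X) (hYcomp : IsCompact Y)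
    (hYinv : ∀ h : G, h ∈ H → T h '' Y = Y)
    (horb : ∃ y ∈ Y, (Set.range fun h : H => T (h : G) y).Infinite) :
    (⋃ i : Fin m, T (g i) '' Y) = Set.univ ∧
    ∀ y ∈ Y, y ∈ closure {z | z ∈ Y ∧ (Set.range fun h : H => T (h : G) z).Finite} := by
  let _ : MulAction G X := homeomorphAction T
  have : ContinuousConstSMul G X := ⟨fun a => (T a).continuous⟩
  obtain ⟨-, -, hdense, hmin⟩ := hcam
  obtain ⟨y, hy, hyinf⟩ := horb
  have hYinf : Y.Infinite :=
    hyinf.mono (range_subset_iff.2 fun h => hYinv h h.2 ▸ mem_image_of_mem _ hy)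
  obtain ⟨hcover, hclosure⟩ :=
    statement15_general hmin hdense hcoset hYcomp.isClosed fun h => hYinv h h.2
  exact ⟨hcover hYinf, hclosure⟩
end

section
/- Let G be a group admitting a chaotic almost minimal action on some compact metric space, and let H be a subgroup of G of finite index. Then H admits a chaotic almost minimal action on some compact metric space. -/
/-!
For a chaotic almost minimal action of `G` on an infinite space `X`, the finitely many translates
of an infinite closed `H`-invariant set by coset representatives have a closed `G`-invariant
union, so they cover `X`. Hence every such set meets the finite set of translates of a point `x₀`
with infinite orbit, and has infinitely many points with finite orbit. By compactness there is a
minimal one, `E`, on which `H` acts as required except possibly for faithfulness.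

Faithfulness is restored by an extension of `E`. Since `H` acts faithfully on `X` with a dense set
of finite orbits, it has normal subgroups `K n` of finite index with trivial intersection, and
acts freely on `∏ H ⧸ K n`. In `E × ∏ H ⧸ K n` the `n`-th coordinate is forgotten over the closed
set of points whose orbit has at most `n` elements. Over a finite orbit only finitely many
coordinates survive, so the fibres are finite; over an infinite orbit all of them survive, so
stabilizers are trivial. A minimal infinite closed invariant set of this extension maps onto `E`,
hence `H` acts on it faithfully.

If `X` is finite then so is `H`, which acts on itself by translations.
-/

open Set MeasureTheory

universe u

section Invariant

open MulAction Topology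
open scoped Pointwise

variable {G X : Type*} [Group G] [MulAction G X]

theorem orbit_subset_of_smul_eq {A : Set X} (hA : ∀ g : G, g • A = A) {x : X} (hx : x ∈ A) :
    orbit G x ⊆ A := by
  rintro _ ⟨g, rfl⟩
  exact hA g ▸ smul_mem_smul_set hx

theorem smul_coe_subMulAction (N : SubMulAction G X) (g : G) : g • (N : Set X) = N :=
  IsInvariantBlock.isFixedBlock
    (fun g => smul_set_subset_iff.2 fun _ hx => N.smul_mem g hx) g

theorem smul_setOf_finite_orbit (g : G) :
    g • {x : X | (orbit G x).Finite} = {x | (orbit G x).Finite} := by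
  ext x
  simp only [mem_smul_set_iff_inv_smul_mem, mem_ofPred_eq, orbit_smul]

theorem finite_orbit_of_equivariant {W : Type*} [MulAction G W] (π : W →[G] X) {w : W}
    (hw : (orbit G (π w)).Finite)
    (hfib : ∀ x : X, (orbit G x).Finite → (π ⁻¹' {x}).Finite) : (orbit G w).Finite := by
  refine (hw.preimage' fun x hx => hfib x ?_).subset ?_
  · rwa [orbit_eq_iff.2 hx]
  · rintro _ ⟨g, rfl⟩
    exact ⟨g, (map_smul π g w).symm⟩

theorem finite_orbit_of_finiteIndex (H : Subgroup G) [H.FiniteIndex] {x : X}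
    (hx : (orbit H x).Finite) : (orbit G x).Finite := by
  refine (finite_iUnion fun q : G ⧸ H => hx.image (q.out • ·)).subset ?_
  rintro _ ⟨g, rfl⟩
  obtain ⟨h, hh⟩ := QuotientGroup.mk_out_eq_mul H g
  refine mem_iUnion.2 ⟨g, h⁻¹ • x, mem_orbit _ _, ?_⟩
  simp [hh, Subgroup.smul_def, smul_smul]

theorem smul_iUnion_out_smul (H : Subgroup G) {A : Set X} (hA : ∀ h : H, h • A = A) (g : G) :
    g • ⋃ q : G ⧸ H, q.out • A = ⋃ q : G ⧸ H, q.out • A := by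
  have smul_eq_out_smul (a : G) : a • A = (a : G ⧸ H).out • A := by
    obtain ⟨h, hh⟩ := QuotientGroup.mk_out_eq_mul H a
    rw [hh, mul_smul, ← Subgroup.smul_def, hA]
  have iUnion_eq : ⋃ q : G ⧸ H, q.out • A = ⋃ a : G, a • A :=
    Subset.antisymm (iUnion_subset fun q => subset_iUnion (fun a : G => a • A) q.out)
      (iUnion_subset fun a => smul_eq_out_smul a ▸ subset_iUnion (fun q : G ⧸ H => q.out • A) a)
  rw [iUnion_eq, smul_set_iUnion]
  simp only [smul_smul]
  exact (Equiv.mulLeft g).surjective.iUnion_comp fun a => a • A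

theorem val_image_setOf_finite_orbit (N : SubMulAction G X) :
    Subtype.val '' {y : N | (orbit G y).Finite} = (N : Set X) ∩ {y | (orbit G y).Finite} := by
  have finite_orbit_iff (y : N) : (orbit G y).Finite ↔ (orbit G (y : X)).Finite := by
    rw [← SubMulAction.val_image_orbit, finite_image_iff Subtype.val_injective.injOn]
  simp only [finite_orbit_iff]
  exact Subtype.image_preimage_coe (N : Set X) {y | (orbit G y).Finite}

variable [TopologicalSpace X]

instance [ContinuousConstSMul G X] (N : SubMulAction G X) : ContinuousConstSMul G N :=
  ⟨fun g => ((continuous_const_smul g).comp continuous_subtype_val).subtype_mk _⟩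

instance [ContinuousConstSMul G X] (H : Subgroup G) : ContinuousConstSMul H X :=
  ⟨fun h => continuous_const_smul (h : G)⟩

theorem lowerSemicontinuous_encard_orbit [T2Space X] [ContinuousConstSMul G X] :
    LowerSemicontinuous fun x : X => (orbit G x).encard := by
  intro x n hn
  obtain ⟨t, ht, htn⟩ := exists_subset_encard_eq (Order.add_one_le_of_lt hn)
  have htfin : t.Finite := by
    rw [← encard_lt_top_iff, htn]
    exact ENat.add_lt_top.2 ⟨hn.trans_le le_top, ENat.one_lt_top⟩
  have hsurj : ∀ a ∈ t, ∃ g : G, g • x = a := ht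
  choose! g hg using hsurj
  have hne : ∀ᶠ z in 𝓝 x, ∀ a ∈ t, ∀ b ∈ t, a ≠ b → g a • z ≠ g b • z := by
    simp only [Filter.eventually_all_finite htfin, Filter.eventually_imp_distrib_left]
    intro a ha b hb hab
    refine ((continuous_const_smul (g a)).continuousAt.ne_iff_eventually_ne
      (continuous_const_smul (g b)).continuousAt).1 ?_
    rwa [hg a ha, hg b hb]
  filter_upwards [hne] with z hz
  have hinj : InjOn (fun a => g a • z) t := fun a ha b hb => not_imp_not.1 (hz a ha b hb)
  calc n < t.encard := by simpa only [htn] using ENat.lt_add_one_iff (ne_top_of_lt hn) |>.2 le_rfl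
    _ ≤ (orbit G z).encard :=
      encard_le_encard_of_injOn (fun a _ => mem_orbit z (g a)) hinj

theorem exists_dense_orbit (G X : Type*) [Monoid G] [TopologicalSpace X] [MulAction G X]
    [ContinuousConstSMul G X] [IsTopologicallyTransitive G X] [BaireSpace X]
    [SecondCountableTopology X] [Nonempty X] : ∃ x : X, Dense (orbit G x) := by
  obtain ⟨b, hbc, hbe, hb⟩ := TopologicalSpace.exists_countable_basis X
  have := hbc.to_subtype
  have hdense : Dense (⋂ V : b, ⋃ g : G, (g • ·) ⁻¹' (V : Set X)) :=
    dense_iInter_of_isOpen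
      (fun V => isOpen_iUnion fun g => (hb.isOpen V.2).preimage (continuous_const_smul g))
      fun V => (hb.isOpen V.2).dense_iUnion_preimage_smul G
        (nonempty_iff_ne_empty.2 fun h => hbe (h ▸ V.2))
  obtain ⟨x, hx⟩ := hdense.nonempty
  refine ⟨x, hb.dense_iff.2 fun V hV _ => ?_⟩
  obtain ⟨g, hg⟩ := mem_iUnion.1 (mem_iInter.1 hx ⟨V, hV⟩)
  exact ⟨g • x, hg, mem_orbit x g⟩

theorem infinite_of_dense {X : Type*} [TopologicalSpace X] [T1Space X] [Infinite X]
    {s : Set X} (hs : Dense s) : s.Infinite := fun hfin =>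
  infinite_univ (hs.closure_eq ▸ hfin.isClosed.closure_eq.symm ▸ hfin)

end Invariant

section Action

open MulAction Topology TopologicalSpace
open scoped Pointwise

/-- The action of `G` on `X` is chaotic almost minimal, except that it need not be faithful.
Topological transitivity is replaced by a dense orbit, and almost minimality is stated
contrapositively: the only infinite closed invariant set is `X`. -/
structure IsChaoticAlmostMinimal (G X : Type*) [Group G] [TopologicalSpace X] [MulAction G X] :
    Prop where
  exists_dense_orbit : ∃ x : X, Dense (orbit G x)
  dense_finite_orbit : Dense {x : X | (orbit G x).Finite}
  eq_univ_of_infinite :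
    ∀ A : Set X, IsClosed A → (∀ g : G, g • A = A) → A.Infinite → A = univ

/-- `G` has a faithful chaotic almost minimal action on a compact metrizable space in `Type u`.
The space is allowed to be finite. -/
def HasChaoticAlmostMinimalAction (G : Type*) [Group G] : Prop :=
  ∃ (Y : Type u) (_ : TopologicalSpace Y) (_ : CompactSpace Y)
    (_ : MetrizableSpace Y) (_ : MulAction G Y) (_ : ContinuousConstSMul G Y),
    FaithfulSMul G Y ∧ IsChaoticAlmostMinimal G Y

variable {G M : Type*} [Group G] [TopologicalSpace M] [MulAction G M]

theorem exists_minimal_closed_invariant [T2Space M] {K : Set M} (hK : IsCompact K)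
    (hKne : K.Nonempty) :
    ∃ E : Set M, Minimal (fun A => IsClosed A ∧ (∀ g : G, g • A = A) ∧ (A ∩ K).Nonempty) E := by
  refine zorn_superset {A | IsClosed A ∧ (∀ g : G, g • A = A) ∧ (A ∩ K).Nonempty}
    fun c hc hchain => ?_
  rcases c.eq_empty_or_nonempty with rfl | hne
  · exact ⟨univ, ⟨isClosed_univ, fun g => smul_set_univ, by rwa [univ_inter]⟩, by simp⟩
  have := hne.to_subtype
  refine ⟨⋂₀ c, ⟨isClosed_sInter fun A hA => (hc hA).1, ?_, ?_⟩, fun A => sInter_subset_of_mem⟩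
  · refine IsInvariantBlock.isFixedBlock fun g => ?_
    rintro _ ⟨x, hx, rfl⟩ A hA
    exact (hc hA).2.1 g ▸ smul_mem_smul_set (hx A hA)
  · rw [sInter_eq_iInter, iInter_inter]
    refine IsCompact.nonempty_iInter_of_directed_nonempty_isCompact_isClosed _ ?_
      (fun A => (hc A.2).2.2) (fun A => hK.inter_left (hc A.2).1)
      (fun A => (hc A.2).1.inter hK.isClosed)
    exact fun A B => (hchain.total A.2 B.2).elim
      (fun h => ⟨A, Subset.rfl, inter_subset_inter_left K h⟩)
      (fun h => ⟨B, inter_subset_inter_left K h, Subset.rfl⟩)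

theorem isChaoticAlmostMinimal_of_minimal [ContinuousConstSMul G M] {N : SubMulAction G M}
    (hN : Minimal (fun A => IsClosed A ∧ (∀ g : G, g • A = A) ∧ A.Infinite) (N : Set M))
    (horbit : ∃ x ∈ N, (orbit G x).Infinite)
    (hperiodic : ((N : Set M) ∩ {x | (orbit G x).Finite}).Infinite) :
    IsChaoticAlmostMinimal G N := by
  obtain ⟨hcl, hinv, -⟩ := hN.prop
  have closure_eq {s : Set M} (hs : ∀ g : G, g • s = s) (hinf : s.Infinite) (hsN : s ⊆ N) :
      closure s = N :=
    hN.eq_of_subset ⟨isClosed_closure, fun g => by rw [← closure_smul, hs],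
      hinf.mono subset_closure⟩ (closure_minimal hsN hcl)
  refine ⟨?_, ?_, fun A hA hAinv hAinf => ?_⟩
  · obtain ⟨x, hxN, hx⟩ := horbit
    refine ⟨⟨x, hxN⟩, ?_⟩
    rw [Subtype.dense_iff, SubMulAction.val_image_orbit]
    exact (closure_eq (smul_orbit · x) hx (orbit_subset_of_smul_eq hinv hxN)).ge
  · refine Subtype.dense_iff.2 ?_
    rw [val_image_setOf_finite_orbit]
    refine (closure_eq (fun g => ?_) hperiodic inter_subset_left).ge
    rw [smul_set_inter, hinv, smul_setOf_finite_orbit]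
  · have image_inv (g : G) : g • (Subtype.val '' A) = Subtype.val '' A :=
      (image_smul_set N.subtype g A).symm.trans (by rw [hAinv]; rfl)
    have hval : Subtype.val '' A = N :=
      hN.eq_of_subset ⟨hcl.isClosedMap_subtype_val _ hA, image_inv,
        hAinf.image Subtype.val_injective.injOn⟩ (Subtype.coe_image_subset _ _)
    rw [← preimage_image_eq A Subtype.val_injective, hval]
    exact Subtype.coe_preimage_self _

theorem exists_isChaoticAlmostMinimal_subMulAction [T2Space M] [ContinuousConstSMul G M]
    [Infinite M] {K : Set M} (hK : IsCompact K) (horbit : ∀ x ∈ K, (orbit G x).Infinite)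
    (hmeet : ∀ A : Set M, IsClosed A → (∀ g : G, g • A = A) → A.Infinite → (A ∩ K).Nonempty)
    (hperiodic : ∀ A : Set M, IsClosed A → (∀ g : G, g • A = A) → A.Infinite →
      (A ∩ {x | (orbit G x).Finite}).Infinite) :
    ∃ N : SubMulAction G M, IsClosed (N : Set M) ∧ (N : Set M).Infinite ∧
      IsChaoticAlmostMinimal G N := by
  have hKne : K.Nonempty := by
    simpa only [univ_inter] using
      hmeet univ isClosed_univ (fun g => smul_set_univ) infinite_univ
  obtain ⟨E, ⟨hcl, hinv, x, hxE, hxK⟩, hmin⟩ := exists_minimal_closed_invariant (G := G) hK hKne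
  have hinf : E.Infinite := (horbit x hxK).mono (orbit_subset_of_smul_eq hinv hxE)
  let N : SubMulAction G M := ⟨E, fun g y hy => hinv g ▸ smul_mem_smul_set hy⟩
  have hN : Minimal (fun A => IsClosed A ∧ (∀ g : G, g • A = A) ∧ A.Infinite) (N : Set M) :=
    ⟨⟨hcl, hinv, hinf⟩, fun A ⟨h₁, h₂, h₃⟩ => hmin ⟨h₁, h₂, hmeet A h₁ h₂ h₃⟩⟩
  exact ⟨N, hcl, hinf,
    isChaoticAlmostMinimal_of_minimal hN ⟨x, hxE, horbit x hxK⟩ (hperiodic E hcl hinv hinf)⟩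

variable {X : Type*} [TopologicalSpace X] [MulAction G X]

theorem IsChaoticAlmostMinimal.exists_infinite_orbit [T1Space X] [Infinite X]
    (hX : IsChaoticAlmostMinimal G X) : ∃ x : X, (orbit G x).Infinite :=
  hX.exists_dense_orbit.imp fun _ => infinite_of_dense

theorem IsChaoticAlmostMinimal.iUnion_out_smul_eq_univ [ContinuousConstSMul G X]
    (hX : IsChaoticAlmostMinimal G X) (H : Subgroup G) [H.FiniteIndex] {A : Set X}
    (hA : IsClosed A) (hinv : ∀ h : H, h • A = A) (hinf : A.Infinite) :
    ⋃ q : G ⧸ H, q.out • A = univ := by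
  refine hX.eq_univ_of_infinite _ (isClosed_iUnion_of_finite fun q => hA.smul _)
    (smul_iUnion_out_smul H hinv) ?_
  exact hinf.smul_set.mono (subset_iUnion (fun q : G ⧸ H => q.out • A) (1 : G))

theorem IsChaoticAlmostMinimal.exists_subMulAction_of_finiteIndex [T2Space X] [Infinite X]
    [ContinuousConstSMul G X] (hX : IsChaoticAlmostMinimal G X) (H : Subgroup G) [H.FiniteIndex] :
    ∃ E : SubMulAction H X, IsClosed (E : Set X) ∧ (E : Set X).Infinite ∧
      IsChaoticAlmostMinimal H E := by
  obtain ⟨x₀, hx₀⟩ := hX.exists_infinite_orbit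
  have hcover {A : Set X} (hA : IsClosed A) (hinv : ∀ h : H, h • A = A) (hinf : A.Infinite)
      (x : X) : ∃ q : G ⧸ H, q.out⁻¹ • x ∈ A := by
    simpa only [mem_iUnion, mem_smul_set_iff_inv_smul_mem] using
      (hX.iUnion_out_smul_eq_univ H hA hinv hinf).ge (mem_univ x)
  refine exists_isChaoticAlmostMinimal_subMulAction
    (K := range fun q : G ⧸ H => q.out⁻¹ • x₀) (finite_range _).isCompact ?_ ?_ ?_
  · rintro _ ⟨q, rfl⟩ hfin
    have := finite_orbit_of_finiteIndex H hfin
    rw [orbit_smul] at this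
    exact hx₀ this
  · intro A hA hinv hinf
    obtain ⟨q, hq⟩ := hcover hA hinv hinf x₀
    exact ⟨_, hq, q, rfl⟩
  · intro A hA hinv hinf hfin
    refine infinite_of_dense hX.dense_finite_orbit ?_
    refine (finite_iUnion fun q : G ⧸ H => hfin.smul_set (a := q.out)).subset fun x hx => ?_
    obtain ⟨q, hq⟩ := hcover hA hinv hinf x
    refine mem_iUnion.2 ⟨q, mem_smul_set_iff_inv_smul_mem.2 ⟨hq, ?_⟩⟩
    rw [mem_ofPred_eq, ← orbit_smul q.out⁻¹ x] at hx
    refine hx.subset ?_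
    rintro _ ⟨h, rfl⟩
    exact mem_orbit _ (h : G)

end Action

section Extension

open MulAction Topology TopologicalSpace
open scoped Pointwise

theorem finite_setOf_not_encard_le {α : Type*} {s : Set α} (hs : s.Finite) :
    {n : ℕ | ¬s.encard ≤ n}.Finite := by
  refine (finite_lt_nat s.ncard).subset fun n hn => ?_
  rw [mem_ofPred_eq, ← hs.cast_ncard_eq] at hn
  exact_mod_cast not_le.1 hn

theorem exists_continuousMap_preimage_zero_eq {X : Type*} [TopologicalSpace X] [CompactSpace X]
    [T2Space X] [PerfectlyNormalSpace X] {D : Set X} (hD : IsClosed D) :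
    ∃ δ : C(X, ℝ), δ ⁻¹' {0} = D := by
  obtain ⟨f, hf, -, -, -⟩ := exists_continuous_one_zero_of_isCompact_of_isGδ hD.isCompact
    hD.isGδ isClosed_empty (disjoint_empty D)
  refine ⟨1 - f, ?_⟩
  rw [hf]
  ext x
  simp [sub_eq_zero, eq_comm (a := (1 : ℝ))]

section Collapse

variable {ι X : Type*} {F : ι → Type*}

/-- Scales the `i`-th fibre coordinate of a point of `X × ∏ F i` over `x`, embedded into `ℝ` by
`c i`, by the factor `δ i x`. This forgets the coordinate exactly over the zeros of `δ i`. -/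
def collapse (δ : ι → X → ℝ) (c : ∀ i, F i → ℝ) (e : X × ∀ i, F i) : X × (ι → ℝ) :=
  (e.1, fun i => δ i e.1 * c i (e.2 i))

variable {δ : ι → X → ℝ} {c : ∀ i, F i → ℝ}

theorem collapse_eq_iff (hc : ∀ i, (c i).Injective) {a b : X × ∀ i, F i} :
    collapse δ c a = collapse δ c b ↔ a.1 = b.1 ∧ ∀ i, δ i a.1 = 0 ∨ a.2 i = b.2 i := by
  simp only [collapse, Prod.mk.injEq, funext_iff]
  refine and_congr_right fun h => forall_congr' fun i => ?_
  rw [← h, mul_eq_mul_left_iff, (hc i).eq_iff, or_comm]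

theorem continuous_collapse [TopologicalSpace X] [∀ i, TopologicalSpace (F i)]
    (hδ : ∀ i, Continuous (δ i)) (hc : ∀ i, Continuous (c i)) : Continuous (collapse δ c) := by
  unfold collapse
  fun_prop

theorem finite_image_collapse_fibre [∀ i, Finite (F i)] {x : X} (hx : {i | δ i x ≠ 0}.Finite) :
    (collapse δ c '' {e | e.1 = x}).Finite := by
  classical
  have := hx.to_subtype
  let s (f : ∀ i : {i | δ i x ≠ 0}, F i) : X × (ι → ℝ) :=
    (x, fun i => if h : δ i x ≠ 0 then δ i x * c i (f ⟨i, h⟩) else 0)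
  refine (finite_range s).subset ?_
  rintro _ ⟨e, rfl, rfl⟩
  refine ⟨fun i => e.2 i, Prod.ext rfl (funext fun i => ?_)⟩
  by_cases h : δ i e.1 = 0 <;> simp [s, collapse, h]

theorem collapse_smul_eq {G : Type*} [SMul G X] [∀ i, SMul G (F i)]
    (hc : ∀ i, (c i).Injective) (hδ : ∀ i (g : G) x, δ i x = 0 → δ i (g • x) = 0) (g : G)
    {a b : X × ∀ i, F i} (hab : collapse δ c a = collapse δ c b) :
    collapse δ c (g • a) = collapse δ c (g • b) := by
  rw [collapse_eq_iff hc] at hab ⊢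
  exact ⟨congrArg (g • ·) hab.1, fun i => (hab.2 i).imp (hδ i g _) (congrArg (g • ·))⟩

theorem eq_one_of_collapse_smul_eq {G : Type*} [Group G] [MulAction G X] [∀ i, MulAction G (F i)]
    [IsCancelSMul G (∀ i, F i)] (hc : ∀ i, (c i).Injective) {g : G} {e : X × ∀ i, F i}
    (he : ∀ i, δ i e.1 ≠ 0) (hg : collapse δ c (g • e) = collapse δ c e) : g = 1 := by
  obtain ⟨-, hfix⟩ := (collapse_eq_iff hc).1 hg.symm
  exact IsCancelSMul.eq_one_of_smul (funext fun i => ((hfix i).resolve_left (he i)).symm)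

end Collapse

theorem exists_continuousConstSMul_of_surjective {G E Z : Type*} [Monoid G] [MulAction G E]
    [TopologicalSpace E] [CompactSpace E] [ContinuousConstSMul G E] [TopologicalSpace Z]
    [T2Space Z] {p : E → Z} (hp : Continuous p) (hsurj : p.Surjective)
    (hsmul : ∀ (g : G) a b, p a = p b → p (g • a) = p (g • b)) :
    ∃ _ : MulAction G Z, ContinuousConstSMul G Z ∧ ∀ (g : G) e, g • p e = p (g • e) := by
  let _ : SMul G Z := ⟨fun g z => p (g • Function.surjInv hsurj z)⟩
  have smul_apply (g : G) (e : E) : g • p e = p (g • e) :=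
    hsmul g _ _ (Function.surjInv_eq hsurj _)
  let _ : MulAction G Z := hsurj.mulAction p fun g e => (smul_apply g e).symm
  refine ⟨inferInstance, ⟨fun g => ?_⟩, smul_apply⟩
  rw [(hp.isClosedMap.isQuotientMap hp hsurj).continuous_iff]
  simpa only [Function.comp_def, smul_apply] using hp.comp (continuous_const_smul g)

theorem exists_mulAction_range_collapse {ι G X : Type*} {F : ι → Type*} [Monoid G]
    [TopologicalSpace X] [CompactSpace X] [T2Space X] [MulAction G X] [ContinuousConstSMul G X]
    [∀ i, TopologicalSpace (F i)] [∀ i, CompactSpace (F i)] [∀ i, MulAction G (F i)]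
    [∀ i, ContinuousConstSMul G (F i)] {δ : ι → X → ℝ} {c : ∀ i, F i → ℝ}
    (hδ : ∀ i, Continuous (δ i)) (hδ_smul : ∀ i (g : G) x, δ i x = 0 → δ i (g • x) = 0)
    (hc : ∀ i, Continuous (c i)) (hc_inj : ∀ i, (c i).Injective) :
    ∃ _ : MulAction G (range (collapse δ c)), ContinuousConstSMul G (range (collapse δ c)) ∧
      ∀ (g : G) e, g • rangeFactorization (collapse δ c) e =
        rangeFactorization (collapse δ c) (g • e) :=
  exists_continuousConstSMul_of_surjective
    ((continuous_collapse hδ hc).subtype_mk _) rangeFactorization_surjective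
    fun g _ _ hab => Subtype.ext (collapse_smul_eq hc_inj hδ_smul g (congrArg Subtype.val hab))

theorem exists_continuousMap_eq_zero_iff_encard_orbit_le (G X : Type*) [Group G] [MulAction G X]
    [TopologicalSpace X] [CompactSpace X] [T2Space X] [PerfectlyNormalSpace X]
    [ContinuousConstSMul G X] :
    ∃ δ : ℕ → C(X, ℝ), ∀ n x, δ n x = 0 ↔ (orbit G x).encard ≤ n := by
  choose δ hδ using fun n : ℕ => exists_continuousMap_preimage_zero_eq
    (lowerSemicontinuous_encard_orbit (G := G) (X := X) |>.isClosed_preimage n)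
  exact ⟨δ, fun n => Set.ext_iff.1 (hδ n)⟩

theorem exists_normal_finiteIndex_iInf_eq_bot {G X : Type*} [Group G] [MulAction G X]
    [FaithfulSMul G X] [TopologicalSpace X] [T2Space X] [SecondCountableTopology X] [Nonempty X]
    [ContinuousConstSMul G X] (hX : Dense {x : X | (orbit G x).Finite}) :
    ∃ K : ℕ → Subgroup G, (∀ n, (K n).Normal) ∧ (∀ n, (K n).FiniteIndex) ∧ ⨅ n, K n = ⊥ := by
  obtain ⟨t, htfin, htc, ht⟩ := hX.exists_countable_dense_subset
  obtain ⟨x, rfl⟩ := htc.exists_eq_range ht.nonempty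
  refine ⟨fun n => (stabilizer G (x n)).normalCore, fun n => inferInstance, fun n => ?_, ?_⟩
  · have := (htfin (mem_range_self n)).to_subtype
    have : (stabilizer G (x n)).FiniteIndex :=
      have := Finite.of_equiv _ (orbitEquivQuotientStabilizer G (x n))
      Subgroup.finiteIndex_of_finite_quotient
    infer_instance
  · refine eq_bot_iff.2 fun g hg => ?_
    have hfix (n : ℕ) : g • x n = x n :=
      Subgroup.normalCore_le _ (Subgroup.mem_iInf.1 hg n)
    have : (g • · : X → X) = id :=
      (continuous_const_smul g).ext_on ht continuous_id (forall_mem_range.2 hfix)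
    exact FaithfulSMul.eq_of_smul_eq_smul (α := X) (by simpa using congrFun this)

theorem isCancelSMul_pi_quotient {ι G : Type*} [Group G] {K : ι → Subgroup G}
    [∀ i, (K i).Normal] (hK : ⨅ i, K i = ⊥) : IsCancelSMul G (∀ i, G ⧸ K i) := by
  refine isCancelSMul_iff_eq_one_of_smul_eq.2 fun g f hgf => ?_
  rw [← Subgroup.mem_bot, ← hK, Subgroup.mem_iInf]
  intro i
  obtain ⟨a, ha⟩ := QuotientGroup.mk_surjective (f i)
  have := congrFun hgf i
  rw [Pi.smul_apply, ← ha, MulAction.Quotient.smul_mk, smul_eq_mul, QuotientGroup.mk_mul,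
    mul_eq_right, QuotientGroup.eq_one_iff] at this
  exact this

variable {G : Type*} {X : Type u} [Group G] [MulAction G X] [TopologicalSpace X]

theorem exists_extension_free_over_infinite_orbits [CompactSpace X] [MetrizableSpace X]
    [ContinuousConstSMul G X] (F : ℕ → Type*) [∀ n, Finite (F n)] [∀ n, Nonempty (F n)]
    [∀ n, MulAction G (F n)] [IsCancelSMul G (∀ n, F n)] :
    ∃ (W : Type u) (_ : TopologicalSpace W) (_ : CompactSpace W)
      (_ : MetrizableSpace W) (_ : MulAction G W) (_ : ContinuousConstSMul G W)
      (π : W →[G] X), Continuous π ∧ (⇑π).Surjective ∧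
        (∀ x, (orbit G x).Finite → (π ⁻¹' {x}).Finite) ∧
        ∀ w (g : G), (orbit G (π w)).Infinite → g • w = w → g = 1 := by
  let _ (n : ℕ) : TopologicalSpace (F n) := ⊥
  have (n : ℕ) : DiscreteTopology (F n) := ⟨rfl⟩
  have (n : ℕ) : ContinuousConstSMul G (F n) := ⟨fun _ => continuous_of_discreteTopology⟩
  obtain ⟨δ, hδ⟩ := exists_continuousMap_eq_zero_iff_encard_orbit_le G X
  have hδ_cont (n : ℕ) : Continuous (δ n) := (δ n).continuous
  choose f hf using fun n => Countable.exists_injective_nat (F n)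
  let c (n : ℕ) (y : F n) : ℝ := f n y
  have hc (n : ℕ) : Continuous (c n) := continuous_of_discreteTopology
  have hc_inj (n : ℕ) : (c n).Injective := Nat.cast_injective.comp (hf n)
  let p := collapse (fun n => δ n) c
  obtain ⟨_, _, hsmul⟩ := exists_mulAction_range_collapse (G := G) hδ_cont
    (fun n g x => by simp only [hδ, orbit_smul, imp_self]) hc hc_inj
  let π : range p →[G] X :=
    ⟨fun w => w.1.1, by rintro g ⟨_, e, rfl⟩; exact congrArg (·.1.1) (hsmul g e)⟩
  refine ⟨range p, inferInstance,
    isCompact_iff_compactSpace.1 (isCompact_range (continuous_collapse hδ_cont hc)),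
    inferInstance, inferInstance, inferInstance, π,
    continuous_fst.comp continuous_subtype_val, ?_, ?_, ?_⟩
  · exact fun x => ⟨rangeFactorization p (x, fun _ => Classical.arbitrary _), rfl⟩
  · intro x hx
    have hne : {n | δ n x ≠ 0}.Finite := by
      simpa only [Ne, hδ] using finite_setOf_not_encard_le hx
    refine Finite.of_finite_image ((finite_image_collapse_fibre (c := c) hne).subset ?_)
      Subtype.val_injective.injOn
    rintro _ ⟨⟨_, e, rfl⟩, he, rfl⟩
    exact ⟨e, he, rfl⟩
  · rintro ⟨_, e, rfl⟩ g hw hg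
    refine eq_one_of_collapse_smul_eq hc_inj (fun n => ?_)
      (congrArg Subtype.val ((hsmul g e).symm.trans hg))
    rw [Ne, hδ]
    exact fun hle => hw (finite_of_encard_le_coe hle)

section Lift

variable {W : Type*} [TopologicalSpace W] [CompactSpace W] [MulAction G W] {π : W →[G] X}

theorem IsChaoticAlmostMinimal.image_eq_univ [T2Space X] (hX : IsChaoticAlmostMinimal G X)
    (hπ : Continuous π) (hfib : ∀ x, (orbit G x).Finite → (π ⁻¹' {x}).Finite) {A : Set W}
    (hA : IsClosed A) (hinv : ∀ g : G, g • A = A) (hinf : A.Infinite) : π '' A = univ := by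
  have hinv' (g : G) : g • (π '' A) = π '' A := by rw [← image_smul_set, hinv]
  refine hX.eq_univ_of_infinite _ (hA.isCompact.image hπ).isClosed hinv' fun hfin => hinf ?_
  refine (hfin.preimage' fun x hx => hfib x ?_).subset (subset_preimage_image π A)
  exact hfin.subset (orbit_subset_of_smul_eq hinv' hx)

theorem IsChaoticAlmostMinimal.exists_subMulAction_image_eq_univ [T2Space X] [T2Space W]
    [ContinuousConstSMul G W] [Infinite X] (hX : IsChaoticAlmostMinimal G X) (hπ : Continuous π)
    (hsurj : (⇑π).Surjective) (hfib : ∀ x, (orbit G x).Finite → (π ⁻¹' {x}).Finite) :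
    ∃ N : SubMulAction G W, IsClosed (N : Set W) ∧ π '' N = univ ∧
      IsChaoticAlmostMinimal G N := by
  obtain ⟨x₀, hx₀⟩ := hX.exists_infinite_orbit
  have := Infinite.of_surjective π hsurj
  have hcover {A : Set W} (hA : IsClosed A) (hinv : ∀ g : G, g • A = A) (hinf : A.Infinite)
      (x : X) : ∃ w ∈ A, π w = x :=
    (hX.image_eq_univ hπ hfib hA hinv hinf).ge (mem_univ x)
  obtain ⟨N, hcl, hinf, hN⟩ : ∃ N : SubMulAction G W, IsClosed (N : Set W) ∧
      (N : Set W).Infinite ∧ IsChaoticAlmostMinimal G N := by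
    refine exists_isChaoticAlmostMinimal_subMulAction
      (isClosed_singleton (x := x₀) |>.preimage hπ).isCompact ?_
      (fun A hA hinv hinf => hcover hA hinv hinf x₀) fun A hA hinv hinf hfin => ?_
    · rintro w rfl hfin
      refine hx₀ ((hfin.image π).subset ?_)
      rintro _ ⟨g, rfl⟩
      exact ⟨g • w, mem_orbit w g, map_smul π g w⟩
    · refine infinite_of_dense hX.dense_finite_orbit ((hfin.image π).subset fun x hx => ?_)
      obtain ⟨w, hw, rfl⟩ := hcover hA hinv hinf x
      exact ⟨w, ⟨hw, finite_orbit_of_equivariant π hx hfib⟩, rfl⟩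
  exact ⟨N, hcl, hX.image_eq_univ hπ hfib hcl (smul_coe_subMulAction N) hinf, hN⟩

end Lift

theorem IsChaoticAlmostMinimal.hasChaoticAlmostMinimalAction_of_isCancelSMul_pi [CompactSpace X]
    [MetrizableSpace X] [ContinuousConstSMul G X] [Infinite X]
    (hX : IsChaoticAlmostMinimal G X) (F : ℕ → Type*) [∀ n, Finite (F n)] [∀ n, Nonempty (F n)]
    [∀ n, MulAction G (F n)] [IsCancelSMul G (∀ n, F n)] :
    HasChaoticAlmostMinimalAction.{u} G := by
  obtain ⟨W, _, _, _, _, _, π, hπ, hsurj, hfib, hfree⟩ :=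
    exists_extension_free_over_infinite_orbits (G := G) (X := X) F
  obtain ⟨N, hcl, himage, hN⟩ := hX.exists_subMulAction_image_eq_univ hπ hsurj hfib
  obtain ⟨x₀, hx₀⟩ := hX.exists_infinite_orbit
  obtain ⟨w, hwN, rfl⟩ := himage.ge (mem_univ x₀)
  refine ⟨N, inferInstance, isCompact_iff_compactSpace.1 hcl.isCompact,
    IsEmbedding.subtypeVal.metrizableSpace, inferInstance, inferInstance, ⟨fun {g h} hgh => ?_⟩, hN⟩
  refine inv_mul_eq_one.1 (hfree w (g⁻¹ * h) hx₀ ?_)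
  rw [mul_smul, inv_smul_eq_iff]
  exact (congrArg Subtype.val (hgh ⟨w, hwN⟩)).symm

end Extension

section Homeomorphisms

open MulAction Topology TopologicalSpace
open scoped Pointwise

/-- The homomorphism into the homeomorphism group given by an action by homeomorphisms. -/
def smulHomeomorphHom (G X : Type*) [Group G] [TopologicalSpace X] [MulAction G X]
    [ContinuousConstSMul G X] : G →* (X ≃ₜ X) where
  toFun := Homeomorph.smul
  map_one' := Homeomorph.ext (one_smul G)
  map_mul' g h := Homeomorph.ext (mul_smul g h)

/-- The action of `G` on `X` by `g • x = T g x`. -/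
abbrev homeomorphHomAction {G X : Type*} [Group G] [TopologicalSpace X] (T : G →* (X ≃ₜ X)) :
    MulAction G X where
  smul g := T g
  one_smul x := congrFun (congrArg DFunLike.coe (map_one T)) x
  mul_smul g h x := congrFun (congrArg DFunLike.coe (map_mul T g h)) x

variable {G X : Type*} [Group G] [TopologicalSpace X]

theorem IsChaoticAlmostMinimal.isCAM_smulHomeomorphHom [MulAction G X] [ContinuousConstSMul G X]
    [FaithfulSMul G X] (hX : IsChaoticAlmostMinimal G X) : IsCAM (smulHomeomorphHom G X) := by
  refine ⟨fun g h hgh => FaithfulSMul.eq_of_smul_eq_smul fun x => DFunLike.congr_fun hgh x,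
    fun U V hU hV hUne hVne => ?_, hX.dense_finite_orbit, fun A hA hinv => ?_⟩
  · obtain ⟨x, hx⟩ := hX.exists_dense_orbit
    obtain ⟨_, hgU, g, rfl⟩ := hx.inter_open_nonempty U hU hUne
    obtain ⟨_, hhV, h, rfl⟩ := hx.inter_open_nonempty V hV hVne
    refine ⟨h * g⁻¹, h • x, ⟨g • x, hgU, ?_⟩, hhV⟩
    exact (smul_smul _ _ _).trans (by rw [inv_mul_cancel_right])
  · contrapose!
    exact hX.eq_univ_of_infinite A hA hinv

theorem IsCAM.isChaoticAlmostMinimal [CompactSpace X] [MetrizableSpace X] [Nonempty X]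
    [MulAction G X] [ContinuousConstSMul G X] (h : IsCAM (smulHomeomorphHom G X)) :
    IsChaoticAlmostMinimal G X := by
  obtain ⟨-, htrans, hdense, hfin⟩ := h
  have : IsTopologicallyTransitive G X :=
    isTopologicallyTransitive_iff G |>.2 fun hU hUne hV hVne => htrans _ _ hU hV hUne hVne
  refine ⟨exists_dense_orbit G X, hdense, fun A hA hinv => ?_⟩
  contrapose!
  exact hfin A hA hinv

theorem IsCAM.faithfulSMul [MulAction G X] [ContinuousConstSMul G X]
    (h : IsCAM (smulHomeomorphHom G X)) : FaithfulSMul G X :=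
  ⟨fun hgh => h.1 (Homeomorph.ext hgh)⟩

theorem isChaoticAlmostMinimal_of_isPretransitive [Finite X] [Nonempty X]
    [DiscreteTopology X] [MulAction G X] [IsPretransitive G X] : IsChaoticAlmostMinimal G X where
  exists_dense_orbit := by simp [orbit_eq_univ]
  dense_finite_orbit := by simp [toFinite]
  eq_univ_of_infinite A _ _ hA := absurd A.toFinite hA

theorem HasChaoticAlmostMinimalAction.of_finite [Finite G] :
    HasChaoticAlmostMinimalAction.{u} G := by
  let e : G ≃ Shrink.{u} G := equivShrink.{u} G
  let _ : TopologicalSpace (Shrink.{u} G) := ⊥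
  have : DiscreteTopology (Shrink.{u} G) := ⟨rfl⟩
  have : IsPretransitive G (Shrink.{u} G) :=
    ⟨fun x y => ⟨e.symm y * (e.symm x)⁻¹, e.symm.injective (by simp [e, equivShrink_symm_smul])⟩⟩
  have : FaithfulSMul G (Shrink.{u} G) :=
    ⟨fun h => by simpa [e, ← equivShrink_smul] using h (e 1)⟩
  exact ⟨Shrink.{u} G, inferInstance, inferInstance, inferInstance, inferInstance,
    ⟨fun g => continuous_of_discreteTopology⟩, inferInstance,
    isChaoticAlmostMinimal_of_isPretransitive⟩

theorem IsChaoticAlmostMinimal.hasChaoticAlmostMinimalAction_subgroup {G : Type*} {X : Type u}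
    [Group G] [TopologicalSpace X] [CompactSpace X] [MetrizableSpace X] [MulAction G X]
    [ContinuousConstSMul G X] [Infinite X] [FaithfulSMul G X] (hX : IsChaoticAlmostMinimal G X)
    (H : Subgroup G) [H.FiniteIndex] : HasChaoticAlmostMinimalAction.{u} H := by
  obtain ⟨E, hcl, hinf, hE⟩ := hX.exists_subMulAction_of_finiteIndex H
  have : CompactSpace E := isCompact_iff_compactSpace.1 hcl.isCompact
  have : MetrizableSpace E := IsEmbedding.subtypeVal.metrizableSpace
  have : Infinite E := hinf.to_subtype
  have hdense : Dense {x : X | (orbit H x).Finite} :=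
    hX.dense_finite_orbit.mono fun x hx =>
      hx.subset (by rintro _ ⟨h, rfl⟩; exact mem_orbit x (h : G))
  obtain ⟨K, hnormal, hindex, hK⟩ := exists_normal_finiteIndex_iInf_eq_bot hdense
  have := isCancelSMul_pi_quotient hK
  exact hE.hasChaoticAlmostMinimalAction_of_isCancelSMul_pi fun n => H ⧸ K n

end Homeomorphisms

/-- A finite-index subgroup of a group admitting a chaotic almost minimal
action on some compact metric space also admits a chaotic almost minimal action on some
compact metric space. -/
theorem statement16 {G : Type*} [Group G] {X : Type u} [MetricSpace X] [CompactSpace X]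
    (T : G →* (X ≃ₜ X)) (hcam : IsCAM T)
    (H : Subgroup G) (hfin : H.FiniteIndex) :
    ∃ (Y : Type u) (_ : MetricSpace Y) (_ : CompactSpace Y) (S : H →* (Y ≃ₜ Y)),
      IsCAM S := by
  suffices hH : HasChaoticAlmostMinimalAction.{u} H by
    obtain ⟨Y, _, _, _, _, _, _, hY⟩ := hH
    exact ⟨Y, TopologicalSpace.metrizableSpaceMetric Y, inferInstance, smulHomeomorphHom H Y,
      hY.isCAM_smulHomeomorphHom⟩
  rcases finite_or_infinite X
  · have : Finite (X ≃ₜ X) := Finite.of_injective _ DFunLike.coe_injective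
    have : Finite G := Finite.of_injective T hcam.1
    exact .of_finite
  · let _ := homeomorphHomAction T
    have : ContinuousConstSMul G X := ⟨fun g => (T g).continuous⟩
    have hT : smulHomeomorphHom G X = T := MonoidHom.ext fun g => Homeomorph.ext fun x => rfl
    rw [← hT] at hcam
    have := hcam.faithfulSMul
    exact hcam.isChaoticAlmostMinimal.hasChaoticAlmostMinimalAction_subgroup H
end
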